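/- Let ε > 0, K ∈ ℕ, and let α ∈ (0,1) be an irrational of type bounded by K. Let E be the complex Banach space of 1-periodic holomorphic functions on Π_ε that are continuous and bounded on the closure of Π_ε, equipped with the sup norm, and for u ∈ E let F_u(z) = z + u(z) (so F_u with u ≡ α represents the rotation R_α). Then there exist κ > 0 and an analytic map Ψ from the open ball of radius κ around the constant function α in E to ℂ such that: Ψ(α) = 0, the Fréchet derivative of Ψ at the constant function α is a nonzero (hence surjective) continuous linear functional, and for every u in this ball, Ψ(u) = 0 if and only if F_u is conformally conjugate to R_α on Π_{ε/2}, i.e. there exists an injective holomorphic Φ : Π_{ε/2} → ℂ with Φ(z+1) = Φ(z)+1 and Φ(F_u(z)) = Φ(z) + α wherever both sides are defined. (Hence the set of maps near R_α that are analytically linearizable on Π_{ε/2} is an embedded analytic submanifold of codimension 1 at R_α.) -/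

import Mathlib

open Filter Set

/-- The Gauss map `x ↦ {1/x}`. -/
noncomputable def gaussMap (x : ℝ) : ℝ := Int.fract x⁻¹

/-- The `i`-th partial quotient `a_i` of the continued fraction
`α = [a_0, a_1, …] = 1/(a_0 + 1/(a_1 + ⋯))` of `α ∈ (0,1)`. -/
noncomputable def partialQuot (α : ℝ) (i : ℕ) : ℕ := (⌊(gaussMap^[i] α)⁻¹⌋).toNat

/-- `α` is of type bounded by `K`: all partial quotients are at most `K`. -/
def BddType (K : ℕ) (α : ℝ) : Prop := ∀ i : ℕ, partialQuot α i ≤ K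

/-- The horizontal strip `Π_ε = {z : |Im z| < ε}` (a lift of the cylinder). -/
def Strip (ε : ℝ) : Set ℂ := {z : ℂ | |z.im| < ε}

/-- Bounded continuous functions on the closed strip, with the sup norm. -/
abbrev StripFun (ε : ℝ) := BoundedContinuousFunction (closure (Strip ε)) ℂ

/-- `u` is (the boundary extension of) a holomorphic function on the open strip. -/
def IsHolo (ε : ℝ) (u : StripFun ε) : Prop :=
  ∃ g : ℂ → ℂ, DifferentiableOn ℂ g (Strip ε) ∧ ∀ z : closure (Strip ε), g z = u z

/-- `u` is `1`-periodic. -/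
def IsPeriodic (ε : ℝ) (u : StripFun ε) : Prop :=
  ∀ (z : ℂ) (h1 : z ∈ closure (Strip ε)) (h2 : z + 1 ∈ closure (Strip ε)),
    u ⟨z + 1, h2⟩ = u ⟨z, h1⟩

/-- The Banach space `E` of `1`-periodic holomorphic functions on `Π_ε` which are
continuous and bounded on the closed strip, with the sup norm, realized as a subspace of
the bounded continuous functions on the closed strip. -/
noncomputable def DSpace (ε : ℝ) : Submodule ℂ (StripFun ε) where
  carrier := {u | IsHolo ε u ∧ IsPeriodic ε u}
  add_mem' := by
    rintro u v ⟨⟨g, hg, hgu⟩, hu⟩ ⟨⟨g', hg', hgv⟩, hv⟩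
    refine ⟨⟨g + g', hg.add hg', fun z => ?_⟩, fun z h1 h2 => ?_⟩
    · simp [hgu z, hgv z]
    · simp [hu z h1 h2, hv z h1 h2]
  zero_mem' := by
    refine ⟨⟨fun _ => 0, differentiableOn_const 0, fun z => ?_⟩, fun z h1 h2 => ?_⟩ <;> simp
  smul_mem' := by
    rintro c u ⟨⟨g, hg, hgu⟩, hu⟩
    refine ⟨⟨c • g, hg.const_smul c, fun z => ?_⟩, fun z h1 h2 => ?_⟩
    · simp [hgu z]
    · simp [hu z h1 h2]

lemma const_mem_DSpace (ε : ℝ) (α : ℝ) :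
    BoundedContinuousFunction.const (↥(closure (Strip ε))) ((α : ℂ)) ∈ DSpace ε :=
  ⟨⟨fun _ => (α : ℂ), differentiableOn_const _, fun _ => rfl⟩, fun _ _ _ => rfl⟩

/-- The rotation `R_α`, i.e. the constant function `α`, as an element of `E`. -/
noncomputable def rotConst (ε : ℝ) (α : ℝ) : DSpace ε :=
  ⟨BoundedContinuousFunction.const _ (α : ℂ), const_mem_DSpace ε α⟩

open Classical in
/-- The circle map `F_u(z) = z + u(z)` associated to `u ∈ E`. -/
noncomputable def Fmap (ε : ℝ) (u : DSpace ε) (z : ℂ) : ℂ :=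
  if h : z ∈ closure (Strip ε) then z + (u : StripFun ε) ⟨z, h⟩ else z

/-- `F_u` is conformally conjugate to the rotation `R_α` on `Π_{ε/2}`. -/
def Linearizable (ε α : ℝ) (u : DSpace ε) : Prop :=
  ∃ Φ : ℂ → ℂ, DifferentiableOn ℂ Φ (Strip (ε / 2)) ∧ Set.InjOn Φ (Strip (ε / 2)) ∧
    (∀ z ∈ Strip (ε / 2), Φ (z + 1) = Φ z + 1) ∧
    (∀ z ∈ Strip (ε / 2), Fmap ε u z ∈ Strip (ε / 2) →
      Φ (Fmap ε u z) = Φ z + (α : ℂ))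

/-!
Write `f = id + x` and look for a conjugacy `h` of the cylinder with `f ∘ h = h ∘ R_α`. Taking
logarithmic derivatives turns this into `log h' ∘ R_α - log h' = log f' ∘ h`. With
`ψ = (log f' ∘ h)'` as the unknown, `log h' = J ψ` up to a constant, where `J` is the Fourier
multiplier `1 / (2πik (exp (2πikα) - 1))`; it is bounded because `α` is badly approximable: the
antidifferentiation pays for the derivative lost to the small divisors. Hence the equation
`ψ (1 + x' ∘ h) = (x'' ∘ h) h'`, in which `h` is a function of `ψ`, is solved near constant `x` by
the ordinary analytic implicit function theorem on the space of absolutely convergent Fourier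
series on a strip; at constant `x` its left side minus its right side is just `ψ`.

For a solution, `f ∘ h` and `h ∘ R_α` have proportional derivatives, so `f ∘ h = h ∘ R_α + Ψ`, where
the number `Ψ` depends analytically on `x` and equals `c - α` at the constant `c`. If `Ψ = 0`, then
`h⁻¹` linearizes `f`. Conversely, if `Φ` linearizes `f` and `H = h ∘ R_α`, then
`Φ ∘ (H + Ψ) - Φ ∘ H` has mean zero over a period of the real line, while the distortion of the
univalent map `Φ` forces this mean to be close to `Ψ`; so `Ψ = 0`.
-/

/-! ### Bounded type implies badly approximable -/

/-- `α` is badly approximable: `|α - m / k| ≥ c / k²` for some `c > 0` and all fractions `m / k`. -/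
def BadlyApproximable (α : ℝ) : Prop :=
  ∃ c > 0, ∀ k : ℤ, k ≠ 0 → ∀ m : ℤ, c ≤ |k * α - m| * |(k : ℝ)|

section GaussMap

variable {x : ℝ} {K : ℕ}

lemma irrational_gaussMap (hirr : Irrational x) : Irrational (gaussMap x) := by
  unfold gaussMap Int.fract
  exact (irrational_inv_iff.2 hirr).sub_intCast _

lemma gaussMap_mem_Ioo (hirr : Irrational x) : gaussMap x ∈ Ioo (0 : ℝ) 1 :=
  ⟨(Int.fract_nonneg _).lt_of_ne (irrational_gaussMap hirr).ne_zero.symm, Int.fract_lt_one _⟩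

lemma bddType_gaussMap (hbt : BddType K x) : BddType K (gaussMap x) := by
  intro i
  have hi := hbt (i + 1)
  rwa [partialQuot, Function.iterate_succ_apply] at hi

lemma exists_inv_eq_natCast_add_gaussMap (hx : x ∈ Ioo (0 : ℝ) 1) (hbt : BddType K x) :
    ∃ a : ℕ, 1 ≤ a ∧ a ≤ K ∧ x⁻¹ = a + gaussMap x := by
  have hfloor : (1 : ℤ) ≤ ⌊x⁻¹⌋ := by
    rw [Int.le_floor]
    exact_mod_cast ((one_lt_inv₀ hx.1).2 hx.2).le
  have hcast : ((⌊x⁻¹⌋.toNat : ℕ) : ℝ) = (⌊x⁻¹⌋ : ℝ) := by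
    exact_mod_cast Int.toNat_of_nonneg (zero_le_one.trans hfloor)
  exact ⟨⌊x⁻¹⌋.toNat, by omega, by simpa [partialQuot] using hbt 0,
    by rw [hcast, gaussMap, Int.floor_add_fract]⟩

lemma one_div_le_of_bddType (hx : x ∈ Ioo (0 : ℝ) 1) (hirr : Irrational x) (hbt : BddType K x) :
    1 / ((K : ℝ) + 1) ≤ x := by
  obtain ⟨a, -, haK, hax⟩ := exists_inv_eq_natCast_add_gaussMap hx hbt
  have ha : (a : ℝ) ≤ K := by exact_mod_cast haK
  rw [one_div_le (by positivity) hx.1, one_div, hax]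
  linarith [(gaussMap_mem_Ioo hirr).2]

lemma bddType_const_le (hx : x ∈ Ioo (0 : ℝ) 1) (hirr : Irrational x) (hbt : BddType K x) {s : ℝ}
    (hs : s ∈ Icc (0 : ℝ) 1) : 1 / (2 * ((K : ℝ) + 1)) * (1 + x * s) ≤ x :=
  calc 1 / (2 * ((K : ℝ) + 1)) * (1 + x * s) ≤ 1 / (2 * ((K : ℝ) + 1)) * 2 := by
        gcongr
        nlinarith [hx.2, hs.1, hs.2]
    _ = 1 / ((K : ℝ) + 1) := by field_simp
    _ ≤ x := one_div_le_of_bddType hx hirr hbt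

end GaussMap

section Descent

variable {x y a s q p : ℝ}

/- The indefinite form `(q, p) ↦ |q x - p| (q + s p)`, normalised by `1 + x s`, is invariant under
the continued fraction step `(x, s) ↦ (1 / x - a, 1 / (a + s))`, `(q, p) ↦ (p, q - p a)`. -/
lemma gauss_step_form (hx : 0 < x) (has : 0 < a + s) (hxy : x * (a + y) = 1) :
    |(p * a + q) * x - p| * ((p * a + q) + s * p)
      = x * (a + s) * (|p * y - q| * (p + (a + s)⁻¹ * q)) := by
  have habs : |(p * a + q) * x - p| = x * |p * y - q| := by
    rw [← abs_of_pos hx, ← abs_mul, abs_of_pos hx, ← abs_neg]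
    congr 1
    linear_combination -p * hxy
  rw [habs]
  field_simp
  ring

lemma gauss_step_norm (has : 0 < a + s) (hxy : x * (a + y) = 1) :
    1 + x * s = x * (a + s) * (1 + y * (a + s)⁻¹) := by
  field_simp
  linear_combination -hxy

lemma le_abs_mul_sub_of_add_one_le (hx : 0 < x) (hy : 0 < y) (hp : 0 < p)
    (hxy : x * (a + y) = 1) (hq : q + 1 ≤ p * a) : x ≤ |q * x - p| := by
  have hle : x * (q + 1) ≤ x * (p * a) := by gcongr
  have hpa : x * (p * a) = p - p * (x * y) := by linear_combination p * hxy
  have hpos : 0 < p * (x * y) := by positivity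
  rw [abs_sub_comm]
  exact le_trans (by linarith) (le_abs_self _)

end Descent

lemma le_abs_mul_sub_mul_add {K n : ℕ} {x : ℝ} (hirr : Irrational x) (hx : x ∈ Ioo (0 : ℝ) 1)
    (hbt : BddType K x) {s : ℝ} (hs : s ∈ Icc (0 : ℝ) 1) {q p : ℕ} (hq : 1 ≤ q)
    (hn : p + q ≤ n) :
    1 / (2 * ((K : ℝ) + 1)) * (1 + x * s) ≤ |q * x - p| * (q + s * p) := by
  induction n generalizing x s q p with
  | zero => omega
  | succ n ih =>
    obtain ⟨a, ha1, -, hax⟩ := exists_inv_eq_natCast_add_gaussMap hx hbt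
    have hy := gaussMap_mem_Ioo hirr
    have hxy : x * (a + gaussMap x) = 1 := by rw [← hax, mul_inv_cancel₀ hx.1.ne']
    have hq' : (1 : ℝ) ≤ q := by exact_mod_cast hq
    have hsum : 1 ≤ q + s * p := by nlinarith [mul_nonneg hs.1 (Nat.cast_nonneg (α := ℝ) p)]
    have hbase (h : x ≤ |q * x - p|) :
        1 / (2 * ((K : ℝ) + 1)) * (1 + x * s) ≤ |q * x - p| * (q + s * p) :=
      (bddType_const_le hx hirr hbt hs).trans
        (h.trans (le_mul_of_one_le_right (abs_nonneg _) hsum))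
    rcases Nat.eq_zero_or_pos p with rfl | hp
    · refine hbase ?_
      rw [Nat.cast_zero, sub_zero, abs_of_nonneg (by nlinarith [hx.1])]
      nlinarith [hx.1]
    rcases lt_or_ge q (p * a) with hqa | hqa
    · exact hbase (le_abs_mul_sub_of_add_one_le hx.1 hy.1 (by exact_mod_cast hp) hxy
        (by exact_mod_cast hqa))
    obtain ⟨q', rfl⟩ := Nat.exists_eq_add_of_le hqa
    have ha : (1 : ℝ) ≤ a := by exact_mod_cast ha1
    have has : 0 < a + s := by linarith [hs.1]
    have hdescent := ih (irrational_gaussMap hirr) hy (bddType_gaussMap hbt)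
      (s := (a + s)⁻¹) ⟨by positivity, inv_le_one_of_one_le₀ (by linarith [hs.1])⟩ (q := p)
      (p := q') hp (by have := Nat.le_mul_of_pos_right p ha1; omega)
    push_cast
    rw [gauss_step_form hx.1 has hxy, gauss_step_norm has hxy, mul_left_comm]
    have := hx.1
    gcongr

lemma BddType.le_abs_mul_sub_mul {K : ℕ} {x : ℝ} (hbt : BddType K x) (hirr : Irrational x)
    (hx : x ∈ Ioo (0 : ℝ) 1) {q : ℕ} (hq : 1 ≤ q) (m : ℤ) :
    1 / (2 * ((K : ℝ) + 1)) ≤ |q * x - m| * q := by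
  rcases le_or_gt 0 m with hm | hm
  · obtain ⟨p, rfl⟩ := Int.eq_ofNat_of_zero_le hm
    simpa using le_abs_mul_sub_mul_add hirr hx hbt (s := 0) (by simp) hq (p := p) le_rfl
  · have hq' : (1 : ℝ) ≤ q := by exact_mod_cast hq
    have hm' : (m : ℝ) ≤ -1 := by exact_mod_cast (by omega : m ≤ -1)
    have habs : 1 ≤ |q * x - m| :=
      le_trans (by nlinarith [hx.1]) (le_abs_self _)
    have hK : 1 / (2 * ((K : ℝ) + 1)) ≤ 1 := by
      rw [div_le_one (by positivity)]
      linarith [Nat.cast_nonneg (α := ℝ) K]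
    exact hK.trans (one_le_mul_of_one_le_of_one_le habs hq')

lemma BddType.badlyApproximable {K : ℕ} {x : ℝ} (hbt : BddType K x) (hirr : Irrational x)
    (hx : x ∈ Ioo (0 : ℝ) 1) : BadlyApproximable x := by
  refine ⟨1 / (2 * ((K : ℝ) + 1)), by positivity, fun k hk m => ?_⟩
  obtain ⟨n, rfl | rfl⟩ := k.eq_nat_or_neg
  · simpa using hbt.le_abs_mul_sub_mul hirr hx (q := n) (by omega) m
  · have habs : |((-n : ℤ) : ℝ) * x - m| = |n * x - (-m : ℤ)| := by
      rw [← abs_neg]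
      congr 1
      push_cast
      ring
    rw [habs, Int.cast_neg (n : ℤ), Int.cast_natCast, abs_neg, Nat.abs_cast]
    exact hbt.le_abs_mul_sub_mul hirr hx (by omega) (-m)

section SmallDivisors

lemma abs_sub_intCast_le_norm_exp_sub_one (t : ℝ) (m : ℤ) (hm : |t - m| ≤ 1 / 2) :
    4 * |t - m| ≤ ‖Complex.exp (2 * Real.pi * Complex.I * t) - 1‖ := by
  have hexp : Complex.exp (2 * Real.pi * Complex.I * t)
      = Complex.exp (Complex.I * (2 * Real.pi * (t - m) : ℝ)) := by
    rw [show (2 * Real.pi * Complex.I * t : ℂ) = Complex.I * (2 * Real.pi * (t - m) : ℝ)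
      + m * (2 * Real.pi * Complex.I) by push_cast; ring, Complex.exp_add,
      Complex.exp_int_mul_two_pi_mul_I, mul_one]
  have hsin : 2 / Real.pi * |Real.pi * (t - m)| ≤ |Real.sin (Real.pi * (t - m))| := by
    apply Real.mul_abs_le_abs_sin
    rw [abs_mul, abs_of_pos Real.pi_pos]
    nlinarith [Real.pi_pos]
  rw [abs_mul, abs_of_pos Real.pi_pos, ← mul_assoc, div_mul_cancel₀ _ Real.pi_ne_zero] at hsin
  rw [hexp, Complex.norm_exp_I_mul_ofReal_sub_one, norm_mul,
    show 2 * Real.pi * (t - m) / 2 = Real.pi * (t - m) by ring, Real.norm_eq_abs, Real.norm_eq_abs,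
    abs_two]
  linarith

lemma BadlyApproximable.le_norm_exp_sub_one {α : ℝ} (hα : BadlyApproximable α) :
    ∃ c > 0, ∀ k : ℤ, k ≠ 0 →
      c ≤ ‖Complex.exp (2 * Real.pi * Complex.I * k * α) - 1‖ * |(k : ℝ)| := by
  obtain ⟨c, hc, h⟩ := hα
  refine ⟨4 * c, by positivity, fun k hk => ?_⟩
  have hexp := abs_sub_intCast_le_norm_exp_sub_one (k * α) (round (k * α)) (abs_sub_round _)
  rw [show (2 * Real.pi * Complex.I * (k * α : ℝ) : ℂ) = 2 * Real.pi * Complex.I * k * α by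
    push_cast; ring] at hexp
  calc 4 * c ≤ 4 * (|k * α - round (k * α)| * |(k : ℝ)|) := by gcongr; exact h k hk _
    _ = 4 * |k * α - round (k * α)| * |(k : ℝ)| := by ring
    _ ≤ _ := by gcongr

end SmallDivisors

/-! ### Bounded families and `ℓ¹` -/

section EllOne

variable {𝕜 ι Y : Type*} [NontriviallyNormedField 𝕜] [NormedAddCommGroup Y] [NormedSpace 𝕜 Y]
  {v : ι → Y} {C : ℝ}

lemma summable_norm_ellOne (x : lp (fun _ : ι => 𝕜) 1) : Summable fun i => ‖x i‖ := by
  simpa using x.2.summable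

lemma norm_ellOne_eq_tsum (x : lp (fun _ : ι => 𝕜) 1) : ‖x‖ = ∑' i, ‖x i‖ := by
  simpa using lp.norm_eq_tsum_rpow (p := 1) (by simp) x

lemma summable_ellOne_smul [CompleteSpace Y] (hv : ∀ i, ‖v i‖ ≤ C) (x : lp (fun _ : ι => 𝕜) 1) :
    Summable fun i => x i • v i := by
  refine .of_norm_bounded ((summable_norm_ellOne x).mul_right C) fun i => ?_
  rw [norm_smul]
  gcongr
  exact hv i

lemma norm_tsum_ellOne_smul_le (hv : ∀ i, ‖v i‖ ≤ C) (x : lp (fun _ : ι => 𝕜) 1) :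
    ‖∑' i, x i • v i‖ ≤ C * ‖x‖ := by
  rw [norm_ellOne_eq_tsum, ← tsum_mul_left]
  refine tsum_of_norm_bounded ((summable_norm_ellOne x).mul_left C).hasSum fun i => ?_
  rw [norm_smul, mul_comm]
  gcongr
  exact hv i

open Classical in
/-- The universal property of `ℓ¹`: the continuous linear map sending the `i`-th unit vector to
`v i`, for a bounded family `v` in a Banach space. The value is `0` if `v` is unbounded. -/
noncomputable def ellOneLift [CompleteSpace Y] (v : ι → Y) : lp (fun _ : ι => 𝕜) 1 →L[𝕜] Y :=
  if hv : ∃ C, ∀ i, ‖v i‖ ≤ C then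
    LinearMap.mkContinuousOfExistsBound
      { toFun := fun x => ∑' i, x i • v i
        map_add' := fun x y => by
          obtain ⟨C, hC⟩ := hv
          simp [add_smul, (summable_ellOne_smul hC x).tsum_add (summable_ellOne_smul hC y)]
        map_smul' := fun c x => by
          obtain ⟨C, hC⟩ := hv
          simp [mul_smul, (summable_ellOne_smul hC x).tsum_const_smul] }
      (hv.imp fun _ hC => norm_tsum_ellOne_smul_le hC)
  else 0

variable [CompleteSpace Y]

lemma ellOneLift_apply (hv : ∀ i, ‖v i‖ ≤ C) (x : lp (fun _ : ι => 𝕜) 1) :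
    ellOneLift v x = ∑' i, x i • v i := by
  have hv' : ∃ C, ∀ i, ‖v i‖ ≤ C := ⟨C, hv⟩
  rw [ellOneLift, dif_pos hv']
  rfl

lemma norm_ellOneLift_le (hC : 0 ≤ C) (hv : ∀ i, ‖v i‖ ≤ C) :
    ‖(ellOneLift v : lp (fun _ : ι => 𝕜) 1 →L[𝕜] Y)‖ ≤ C :=
  ContinuousLinearMap.opNorm_le_bound _ hC fun x => by
    rw [ellOneLift_apply hv]
    exact norm_tsum_ellOne_smul_le hv x

lemma ellOneLift_single [DecidableEq ι] (hv : ∀ i, ‖v i‖ ≤ C) (i : ι) :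
    ellOneLift v (lp.single 1 i (1 : 𝕜)) = v i := by
  rw [ellOneLift_apply hv, tsum_eq_single i]
  · simp
  · intro j hj
    simp [hj]

end EllOne

/-! ### Fourier series with exponentially decaying coefficients -/

/-- The space `ℓ¹(ℤ)`. Relative to a width `r`, the sequence `x` encodes the Fourier series
`∑ x k e^{-2πr|k|} e^{2πikz}`, which converges absolutely on the closed strip `|Im z| ≤ r`. -/
noncomputable abbrev WienerSeq := lp (fun _ : ℤ => ℂ) 1

namespace WienerSeq

/-- The `k`-th unit vector. -/
noncomputable def mode (k : ℤ) : WienerSeq := lp.single 1 k 1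

lemma norm_mode (k : ℤ) : ‖mode k‖ = 1 := by
  simp [mode, lp.norm_single]

instance : Nontrivial WienerSeq :=
  ⟨⟨mode 0, 0, fun h => by simpa [norm_mode] using congrArg norm h⟩⟩

section Lift

variable {Y : Type*} [NormedAddCommGroup Y] [NormedSpace ℂ Y]

lemma clm_ext {S T : WienerSeq →L[ℂ] Y} (h : ∀ k, S (mode k) = T (mode k)) : S = T :=
  lp.ext_continuousLinearMap ENNReal.one_ne_top fun k => ContinuousLinearMap.ext_ring (h k)

lemma lift_mode [CompleteSpace Y] {v : ℤ → Y} {C : ℝ} (hv : ∀ k, ‖v k‖ ≤ C) (k : ℤ) :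
    ellOneLift v (mode k) = v k :=
  ellOneLift_single hv k

lemma norm_lift_le [CompleteSpace Y] {v : ℤ → Y} {C : ℝ} (hv : ∀ k, ‖v k‖ ≤ C) :
    ‖(ellOneLift v : WienerSeq →L[ℂ] Y)‖ ≤ C :=
  norm_ellOneLift_le ((norm_nonneg _).trans (hv 0)) hv

end Lift

/-- The `k`-th coefficient as a continuous linear functional. -/
noncomputable abbrev coeff (k : ℤ) : WienerSeq →L[ℂ] ℂ := lp.evalCLM ℂ (fun _ : ℤ => ℂ) 1 k

lemma coeff_mode (k j : ℤ) : coeff k (mode j) = if j = k then 1 else 0 := by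
  simp [mode, coeff, lp.evalCLM, Pi.single_apply, eq_comm]

/-- The Fourier multiplier with symbol `d`. It is `0` if `d` is unbounded. -/
noncomputable def multiplier (d : ℤ → ℂ) : WienerSeq →L[ℂ] WienerSeq :=
  ellOneLift fun k => d k • mode k

section Multiplier

variable {d : ℤ → ℂ} {C : ℝ}

lemma norm_smul_mode (c : ℂ) (k : ℤ) : ‖c • mode k‖ = ‖c‖ := by
  rw [norm_smul, norm_mode, mul_one]

lemma multiplier_mode (hd : ∀ k, ‖d k‖ ≤ C) (k : ℤ) : multiplier d (mode k) = d k • mode k :=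
  lift_mode (fun k => (norm_smul_mode (d k) k).trans_le (hd k)) k

lemma norm_multiplier_le (hd : ∀ k, ‖d k‖ ≤ C) : ‖multiplier d‖ ≤ C :=
  norm_lift_le fun k => (norm_smul_mode (d k) k).trans_le (hd k)

end Multiplier

/-! ### Evaluation -/

/-- The function `e^{2πikz - 2πr|k|}` encoded by the `k`-th unit vector at width `r`. -/
noncomputable def expMode (r : ℝ) (z : ℂ) (k : ℤ) : ℂ :=
  Complex.exp (2 * Real.pi * Complex.I * k * z - 2 * Real.pi * r * |(k : ℝ)|)

section ExpMode

variable {r s : ℝ} {z : ℂ}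

lemma norm_expMode_le_exp (hz : |z.im| ≤ s) (k : ℤ) :
    ‖expMode r z k‖ ≤ Real.exp (-(2 * Real.pi * (r - s) * |(k : ℝ)|)) := by
  have hre : (2 * Real.pi * Complex.I * k * z - 2 * Real.pi * r * |(k : ℝ)| : ℂ).re
      = -(2 * Real.pi * (k * z.im)) - 2 * Real.pi * r * |(k : ℝ)| := by
    simp [Complex.mul_re, Complex.mul_im]
    ring
  have him : -(k * z.im) ≤ |(k : ℝ)| * s :=
    calc -(k * z.im) ≤ |(k : ℝ) * z.im| := neg_le_abs _
      _ = |(k : ℝ)| * |z.im| := abs_mul _ _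
      _ ≤ _ := by gcongr
  rw [expMode, Complex.norm_exp, Real.exp_le_exp, hre]
  nlinarith [Real.pi_pos]

lemma norm_expMode_le_one (hz : |z.im| ≤ r) (k : ℤ) : ‖expMode r z k‖ ≤ 1 := by
  simpa using norm_expMode_le_exp (r := r) hz k

lemma expMode_zero : expMode r z 0 = 1 := by
  simp [expMode]

lemma expMode_add_one : expMode r (z + 1) = expMode r z := by
  funext k
  rw [expMode, expMode, show (2 * Real.pi * Complex.I * k * (z + 1)
      - 2 * Real.pi * r * |(k : ℝ)| : ℂ)
    = (2 * Real.pi * Complex.I * k * z - 2 * Real.pi * r * |(k : ℝ)|)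
      + k * (2 * Real.pi * Complex.I) by ring, Complex.exp_add, Complex.exp_int_mul_two_pi_mul_I,
    mul_one]

lemma expMode_add_width (τ : ℝ) (k : ℤ) :
    expMode (r + τ) z k = (Real.exp (-(2 * Real.pi * τ * |(k : ℝ)|)) : ℝ) * expMode r z k := by
  rw [expMode, expMode, Complex.ofReal_exp, ← Complex.exp_add]
  congr 1
  push_cast
  ring

end ExpMode

/-- Evaluation at `z` of the Fourier series of width `r` encoded by a sequence. -/
noncomputable def evalAt (r : ℝ) (z : ℂ) : WienerSeq →L[ℂ] ℂ := ellOneLift (expMode r z)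

section EvalAt

variable {r : ℝ} {z : ℂ}

lemma evalAt_mode (hz : |z.im| ≤ r) (k : ℤ) : evalAt r z (mode k) = expMode r z k :=
  lift_mode (norm_expMode_le_one hz) k

lemma evalAt_mode_zero (hz : |z.im| ≤ r) : evalAt r z (mode 0) = 1 := by
  rw [evalAt_mode hz, expMode_zero]

lemma evalAt_apply (hz : |z.im| ≤ r) (x : WienerSeq) :
    evalAt r z x = ∑' k, x k * expMode r z k :=
  ellOneLift_apply (norm_expMode_le_one hz) x

lemma norm_evalAt_le (hz : |z.im| ≤ r) (x : WienerSeq) : ‖evalAt r z x‖ ≤ ‖x‖ := by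
  simpa using (evalAt r z).le_of_opNorm_le (norm_lift_le (norm_expMode_le_one hz)) x

lemma evalAt_add_one (x : WienerSeq) : evalAt r (z + 1) x = evalAt r z x := by
  rw [evalAt, expMode_add_one, evalAt]

end EvalAt

/-! ### Multiplication -/

/-- The structure constants of the product: `mode k * mode j = mulWeight δ k j • mode (k + j)`. -/
noncomputable def mulWeight (δ : ℝ) (k j : ℤ) : ℂ :=
  (Real.exp (-(2 * Real.pi * δ) * (|(j : ℝ)| + |(k : ℝ)| - |((k + j : ℤ) : ℝ)|)) : ℝ)

/-- The operator of pointwise multiplication, for functions on the strip of width `δ`. -/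
noncomputable def mulOp (δ : ℝ) : WienerSeq →L[ℂ] WienerSeq →L[ℂ] WienerSeq :=
  ellOneLift fun k => ellOneLift fun j => mulWeight δ k j • mode (k + j)

section Mul

variable {δ : ℝ}

lemma norm_mulWeight_le_one (hδ : 0 ≤ δ) (k j : ℤ) : ‖mulWeight δ k j‖ ≤ 1 := by
  have htri : |((k + j : ℤ) : ℝ)| ≤ |(k : ℝ)| + |(j : ℝ)| := by
    push_cast
    exact abs_add_le _ _
  have hpos : 0 ≤ 2 * Real.pi * δ := by positivity
  rw [mulWeight, Complex.norm_real, Real.norm_eq_abs, Real.abs_exp, Real.exp_le_one_iff]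
  nlinarith

lemma mulWeight_mul_expMode (z : ℂ) (k j : ℤ) :
    mulWeight δ k j * expMode δ z (k + j) = expMode δ z k * expMode δ z j := by
  rw [mulWeight, expMode, expMode, expMode, Complex.ofReal_exp, ← Complex.exp_add,
    ← Complex.exp_add]
  congr 1
  push_cast
  ring

lemma norm_mulWeight_smul_mode_le_one (hδ : 0 ≤ δ) (k j : ℤ) :
    ‖mulWeight δ k j • mode (k + j)‖ ≤ 1 :=
  (norm_smul_mode _ _).trans_le (norm_mulWeight_le_one hδ k j)

lemma norm_lift_mulWeight_le_one (hδ : 0 ≤ δ) (k : ℤ) :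
    ‖(ellOneLift fun j => mulWeight δ k j • mode (k + j) : WienerSeq →L[ℂ] WienerSeq)‖ ≤ 1 :=
  norm_lift_le (norm_mulWeight_smul_mode_le_one hδ k)

lemma norm_mulOp_apply_le (hδ : 0 ≤ δ) (a : WienerSeq) : ‖mulOp δ a‖ ≤ ‖a‖ := by
  simpa using (mulOp δ).le_of_opNorm_le (norm_lift_le (norm_lift_mulWeight_le_one hδ)) a

lemma mulOp_mode_mode (hδ : 0 ≤ δ) (k j : ℤ) :
    mulOp δ (mode k) (mode j) = mulWeight δ k j • mode (k + j) := by
  rw [mulOp, lift_mode (norm_lift_mulWeight_le_one hδ),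
    lift_mode (norm_mulWeight_smul_mode_le_one hδ k)]

lemma mulOp_apply_mode_zero (hδ : 0 ≤ δ) (x : WienerSeq) : mulOp δ x (mode 0) = x := by
  have hflip : (mulOp δ).flip (mode 0) = ContinuousLinearMap.id ℂ WienerSeq :=
    clm_ext fun k => by simp [mulOp_mode_mode hδ, mulWeight]
  exact DFunLike.congr_fun hflip x

variable {z : ℂ}

lemma evalAt_mulOp (hδ : 0 ≤ δ) (hz : |z.im| ≤ δ) (a b : WienerSeq) :
    evalAt δ z (mulOp δ a b) = evalAt δ z a * evalAt δ z b := by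
  have hmode (j : ℤ) :
      (evalAt δ z).comp ((mulOp δ).flip (mode j)) = expMode δ z j • evalAt δ z :=
    clm_ext fun k => by
      simpa [mulOp_mode_mode hδ, evalAt_mode hz, mul_comm (expMode δ z j)] using
        mulWeight_mul_expMode z k j
  have hmul : (evalAt δ z).comp (mulOp δ a) = evalAt δ z a • evalAt δ z :=
    clm_ext fun j => by
      simpa [evalAt_mode hz, mul_comm] using DFunLike.congr_fun (hmode j) a
  simpa using DFunLike.congr_fun hmul b

lemma evalAt_mulOp_pow (hδ : 0 ≤ δ) (hz : |z.im| ≤ δ) (a b : WienerSeq) (n : ℕ) :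
    evalAt δ z ((mulOp δ a ^ n) b) = evalAt δ z a ^ n * evalAt δ z b := by
  induction n with
  | zero => simp
  | succ n ih =>
    rw [pow_succ', mul_apply_eq_comp, evalAt_mulOp hδ hz, ih]
    ring

lemma evalAt_exp_mulOp (hδ : 0 ≤ δ) (hz : |z.im| ≤ δ) (a b : WienerSeq) :
    evalAt δ z (NormedSpace.exp (mulOp δ a) b) = Complex.exp (evalAt δ z a) * evalAt δ z b := by
  have hop := ((evalAt δ z).comp (ContinuousLinearMap.apply ℂ WienerSeq b)).hasSum
    (NormedSpace.exp_series_hasSum_exp' (𝕂 := ℂ) (mulOp δ a))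
  have hscalar := (NormedSpace.exp_series_hasSum_exp' (𝕂 := ℂ) (evalAt δ z a)).mul_right
    (evalAt δ z b)
  rw [← Complex.exp_eq_exp_ℂ] at hscalar
  refine hop.unique ?_
  convert! hscalar using 2 with n
  simp only [ContinuousLinearMap.comp_apply, map_smul, ContinuousLinearMap.apply_apply,
    evalAt_mulOp_pow hδ hz, smul_eq_mul, mul_assoc]

end Mul

end WienerSeq

lemma isOpen_strip (r : ℝ) : IsOpen (Strip r) :=
  isOpen_lt (by fun_prop) continuous_const

lemma strip_mono {r s : ℝ} (hrs : r ≤ s) : Strip r ⊆ Strip s := fun _ hz => lt_of_lt_of_le hz hrs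

lemma convex_strip (r : ℝ) : Convex ℝ (Strip r) := by
  have hpre : Strip r = Complex.imLm ⁻¹' Ioo (-r) r := by
    ext z
    simp [Strip, abs_lt]
  rw [hpre]
  exact (convex_Ioo _ _).is_linear_preimage Complex.imLm.isLinear

lemma closedBall_subset_strip {r s : ℝ} {z : ℂ} (hz : z ∈ Strip r) :
    Metric.closedBall z s ⊆ Strip (r + s) :=
  fun w hw => by
    rw [Metric.mem_closedBall, dist_eq_norm] at hw
    calc |w.im| = |z.im + (w - z).im| := by simp
      _ ≤ |z.im| + |(w - z).im| := abs_add_le _ _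
      _ < r + s := add_lt_add_of_lt_of_le hz ((Complex.abs_im_le_norm _).trans hw)

namespace WienerSeq

open scoped Nat

/-! ### Differentiation -/

/-- The frequency `2πik` of the `k`-th mode. -/
noncomputable def freq (k : ℤ) : ℂ := 2 * Real.pi * Complex.I * k

lemma freq_zero : freq 0 = 0 := by
  simp [freq]

lemma norm_freq (k : ℤ) : ‖freq k‖ = 2 * Real.pi * |(k : ℝ)| := by
  simp [freq, abs_of_pos Real.pi_pos]

lemma one_le_norm_freq {k : ℤ} (hk : k ≠ 0) : 1 ≤ ‖freq k‖ := by
  have habs : (1 : ℝ) ≤ |(k : ℝ)| := by exact_mod_cast Int.one_le_abs hk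
  rw [norm_freq]
  nlinarith [Real.pi_gt_three]

lemma freq_ne_zero {k : ℤ} (hk : k ≠ 0) : freq k ≠ 0 :=
  norm_pos_iff.1 (one_pos.trans_le (one_le_norm_freq hk))

lemma expMode_add (r : ℝ) (z w : ℂ) (k : ℤ) :
    expMode r (z + w) k = Complex.exp (freq k * w) * expMode r z k := by
  rw [expMode, expMode, ← Complex.exp_add, freq]
  congr 1
  ring

lemma pow_div_factorial_mul_exp_neg_le {τ t : ℝ} (hτ : 0 < τ) (ht : 0 ≤ t) (n : ℕ) :
    t ^ n / n ! * Real.exp (-(τ * t)) ≤ τ⁻¹ ^ n := by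
  rw [Real.exp_neg, ← div_eq_mul_inv, div_le_iff₀ (Real.exp_pos _)]
  calc t ^ n / n ! = τ⁻¹ ^ n * ((τ * t) ^ n / n !) := by
        rw [mul_pow, inv_pow]
        field_simp
    _ ≤ τ⁻¹ ^ n * Real.exp (τ * t) := by
        gcongr
        exact Real.pow_div_factorial_le_exp (τ * t) (by positivity) n

/-- The operator `f ↦ f⁽ⁿ⁾ / n!` from functions on the strip of width `r + τ` to functions on the
strip of width `r`. The loss `τ` of width makes it bounded; for `n = 0` it is the restriction. -/
noncomputable def taylorOp (n : ℕ) (τ : ℝ) : WienerSeq →L[ℂ] WienerSeq :=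
  multiplier fun k => freq k ^ n / n ! * (Real.exp (-(2 * Real.pi * τ * |(k : ℝ)|)) : ℝ)

/-- Evaluation at `z` of the derivative of the Fourier series of width `r`, for `|Im z| < r`. -/
noncomputable def evalDeriv (r : ℝ) (z : ℂ) : WienerSeq →L[ℂ] ℂ :=
  ellOneLift fun k => freq k * expMode r z k

section Taylor

variable {r s τ : ℝ} {z : ℂ}

lemma norm_taylorOp_symbol_le (hτ : 0 < τ) (n : ℕ) (k : ℤ) :
    ‖freq k ^ n / n ! * (Real.exp (-(2 * Real.pi * τ * |(k : ℝ)|)) : ℝ)‖ ≤ τ⁻¹ ^ n := by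
  rw [norm_mul, norm_div, norm_pow, Complex.norm_real, Real.norm_eq_abs, Real.abs_exp,
    Complex.norm_natCast, show 2 * Real.pi * τ * |(k : ℝ)| = τ * ‖freq k‖ by rw [norm_freq]; ring]
  exact pow_div_factorial_mul_exp_neg_le hτ (norm_nonneg _) n

lemma norm_taylorOp_le (hτ : 0 < τ) (n : ℕ) : ‖taylorOp n τ‖ ≤ τ⁻¹ ^ n :=
  norm_multiplier_le (norm_taylorOp_symbol_le hτ n)

lemma taylorOp_mode (hτ : 0 < τ) (n : ℕ) (k : ℤ) :
    taylorOp n τ (mode k)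
      = (freq k ^ n / n ! * (Real.exp (-(2 * Real.pi * τ * |(k : ℝ)|)) : ℝ)) • mode k :=
  multiplier_mode (norm_taylorOp_symbol_le hτ n) k

lemma evalAt_taylorOp_mode (hτ : 0 < τ) (hz : |z.im| ≤ r) (n : ℕ) (k : ℤ) :
    evalAt r z (taylorOp n τ (mode k)) = freq k ^ n / n ! * expMode (r + τ) z k := by
  rw [taylorOp_mode hτ, map_smul, evalAt_mode hz, expMode_add_width, smul_eq_mul, mul_assoc]

lemma norm_freq_mul_expMode_le (hs : s < r) (hz : |z.im| ≤ s) (k : ℤ) :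
    ‖freq k * expMode r z k‖ ≤ (r - s)⁻¹ :=
  calc ‖freq k * expMode r z k‖
      ≤ ‖freq k‖ * Real.exp (-(2 * Real.pi * (r - s) * |(k : ℝ)|)) := by
        rw [norm_mul]
        gcongr
        exact norm_expMode_le_exp hz k
    _ = ‖freq k‖ ^ 1 / 1 ! * Real.exp (-((r - s) * ‖freq k‖)) := by
        rw [norm_freq, pow_one, Nat.factorial_one, Nat.cast_one, div_one]
        ring_nf
    _ ≤ (r - s)⁻¹ ^ 1 := pow_div_factorial_mul_exp_neg_le (sub_pos.2 hs) (norm_nonneg _) 1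
    _ = (r - s)⁻¹ := pow_one _

lemma evalDeriv_mode (hz : |z.im| < r) (k : ℤ) :
    evalDeriv r z (mode k) = freq k * expMode r z k :=
  lift_mode (norm_freq_mul_expMode_le hz le_rfl) k

lemma hasDerivAt_expMode (r : ℝ) (k : ℤ) (z : ℂ) :
    HasDerivAt (fun w => expMode r w k) (freq k * expMode r z k) z := by
  have hlin : HasDerivAt
      (fun w : ℂ => 2 * Real.pi * Complex.I * k * w - 2 * Real.pi * r * |(k : ℝ)|) (freq k) z := by
    simpa [freq] using ((hasDerivAt_id z).const_mul (2 * Real.pi * Complex.I * k)).sub_const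
      (2 * Real.pi * r * |(k : ℝ)| : ℂ)
  simpa only [expMode, mul_comm (freq k)] using hlin.cexp

lemma hasDerivAt_evalAt (hz : |z.im| < r) (x : WienerSeq) :
    HasDerivAt (fun w => evalAt r w x) (evalDeriv r z x) z := by
  obtain ⟨s, hzs, hsr⟩ := exists_between hz
  have hsum : HasDerivAt (fun w => ∑' k, x k * expMode r w k)
      (∑' k, x k * (freq k * expMode r z k)) z :=
    hasDerivAt_tsum_of_isPreconnected ((summable_norm_ellOne x).mul_right (r - s)⁻¹)
      (isOpen_strip s) (convex_strip s).isPreconnected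
      (fun k w _ => (hasDerivAt_expMode r k w).const_mul (x k))
      (fun k w hw => by
        rw [norm_mul]
        gcongr
        exact norm_freq_mul_expMode_le hsr (le_of_lt hw) k)
      hzs (summable_ellOne_smul (norm_expMode_le_one hz.le) x) hzs
  rw [evalDeriv, ellOneLift_apply (norm_freq_mul_expMode_le hz le_rfl)]
  refine hsum.congr_of_eventuallyEq ?_
  filter_upwards [(isOpen_strip s).mem_nhds hzs] with w hw
  exact evalAt_apply (hw.le.trans hsr.le) x

lemma evalAt_taylorOp_zero (hτ : 0 < τ) (hz : |z.im| ≤ r) (x : WienerSeq) :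
    evalAt r z (taylorOp 0 τ x) = evalAt (r + τ) z x := by
  have hcomp : (evalAt r z).comp (taylorOp 0 τ) = evalAt (r + τ) z :=
    clm_ext fun k => by
      simp [evalAt_taylorOp_mode hτ hz, evalAt_mode (hz.trans (le_add_of_nonneg_right hτ.le))]
  exact DFunLike.congr_fun hcomp x

lemma evalAt_taylorOp_one (hτ : 0 < τ) (hz : |z.im| ≤ r) (x : WienerSeq) :
    evalAt r z (taylorOp 1 τ x) = evalDeriv (r + τ) z x := by
  have hcomp : (evalAt r z).comp (taylorOp 1 τ) = evalDeriv (r + τ) z :=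
    clm_ext fun k => by
      simp [evalAt_taylorOp_mode hτ hz, evalDeriv_mode (hz.trans_lt (lt_add_of_pos_right r hτ))]
  exact DFunLike.congr_fun hcomp x

lemma two_mul_evalAt_taylorOp_two (hτ : 0 < τ) (hz : |z.im| < r) (x : WienerSeq) :
    2 * evalAt r z (taylorOp 2 τ x) = evalDeriv r z (taylorOp 1 τ x) := by
  have hcomp : (2 : ℂ) • (evalAt r z).comp (taylorOp 2 τ) = (evalDeriv r z).comp (taylorOp 1 τ) :=
    clm_ext fun k => by
      simp only [smul_apply, ContinuousLinearMap.comp_apply, taylorOp_mode hτ, map_smul,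
        evalAt_mode hz.le, evalDeriv_mode hz, smul_eq_mul,
        Nat.factorial_two, Nat.factorial_one, Nat.cast_one, Nat.cast_ofNat]
      ring
  exact DFunLike.congr_fun hcomp x

lemma taylorOp_mode_zero {n : ℕ} (hn : n ≠ 0) (hτ : 0 < τ) : taylorOp n τ (mode 0) = 0 := by
  simp [taylorOp_mode hτ, freq_zero, hn]

end Taylor

/-! ### Antidifferentiation and the cohomological equation -/

/-- The primitive of mean zero of `x - coeff 0 x`. The symbol vanishes at `k = 0` since
`0⁻¹ = 0`. -/
noncomputable def primitiveOp : WienerSeq →L[ℂ] WienerSeq := multiplier fun k => (freq k)⁻¹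

/-- The operator `(R_α - 1)⁻¹ ∘ ∂⁻¹` solving the cohomological equation
`η (z + α) - η z = primitiveOp x z`. The antiderivative compensates the small divisors. -/
noncomputable def cohomologicalOp (α : ℝ) : WienerSeq →L[ℂ] WienerSeq :=
  multiplier fun k => (freq k * (Complex.exp (freq k * α) - 1))⁻¹

section Cohomological

variable {r α : ℝ} {z : ℂ}

lemma norm_inv_freq_le_one (k : ℤ) : ‖(freq k)⁻¹‖ ≤ 1 := by
  rcases eq_or_ne k 0 with rfl | hk
  · simp [freq_zero]
  · rw [norm_inv]
    exact inv_le_one_of_one_le₀ (one_le_norm_freq hk)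

lemma primitiveOp_mode (k : ℤ) : primitiveOp (mode k) = (freq k)⁻¹ • mode k :=
  multiplier_mode norm_inv_freq_le_one k

lemma evalDeriv_primitiveOp (hz : |z.im| < r) (x : WienerSeq) :
    evalDeriv r z (primitiveOp x) = evalAt r z x - coeff 0 x := by
  have hcomp : (evalDeriv r z).comp primitiveOp = evalAt r z - coeff 0 :=
    clm_ext fun k => by
      rw [ContinuousLinearMap.comp_apply, primitiveOp_mode, map_smul, evalDeriv_mode hz,
        sub_apply, evalAt_mode hz.le, coeff_mode]
      rcases eq_or_ne k 0 with rfl | hk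
      · simp [freq_zero, expMode_zero]
      · simp [hk, freq_ne_zero hk]
  exact DFunLike.congr_fun hcomp x

lemma exp_freq_mul_ne_one (hα : BadlyApproximable α) {k : ℤ}
    (hk : k ≠ 0) : Complex.exp (freq k * α) ≠ 1 := by
  obtain ⟨c, hc, h⟩ := hα.le_norm_exp_sub_one
  intro hexp
  have hk' := h k hk
  rw [← freq, hexp, sub_self, norm_zero, zero_mul] at hk'
  exact hc.not_ge hk'

lemma exists_norm_cohomologicalOp_symbol_le (hα : BadlyApproximable α) :
    ∃ C, ∀ k, ‖(freq k * (Complex.exp (freq k * α) - 1))⁻¹‖ ≤ C := by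
  obtain ⟨c, hc, h⟩ := hα.le_norm_exp_sub_one
  refine ⟨c⁻¹, fun k => ?_⟩
  rcases eq_or_ne k 0 with rfl | hk
  · simpa [freq_zero] using hc.le
  rw [norm_inv, norm_mul]
  refine inv_anti₀ hc ((h k hk).trans ?_)
  rw [← freq, mul_comm]
  gcongr
  rw [norm_freq]
  nlinarith [Real.pi_gt_three, abs_nonneg (k : ℝ)]

lemma evalAt_add_cohomologicalOp (hα : BadlyApproximable α) (hz : |z.im| ≤ r) (x : WienerSeq) :
    evalAt r (z + α) (cohomologicalOp α x)
      = evalAt r z (cohomologicalOp α x) + evalAt r z (primitiveOp x) := by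
  obtain ⟨C, hC⟩ := exists_norm_cohomologicalOp_symbol_le hα
  have hz' : |(z + α).im| ≤ r := by simpa using hz
  have hcomp : (evalAt r (z + α)).comp (cohomologicalOp α)
      = (evalAt r z).comp (cohomologicalOp α) + (evalAt r z).comp primitiveOp :=
    clm_ext fun k => by
      simp only [cohomologicalOp, add_apply, ContinuousLinearMap.comp_apply,
        primitiveOp_mode, multiplier_mode hC, map_smul, evalAt_mode hz', evalAt_mode hz,
        expMode_add, smul_eq_mul]
      rcases eq_or_ne k 0 with rfl | hk
      · simp [freq_zero]
      · have hfreq := freq_ne_zero hk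
        have hexp := sub_ne_zero.2 (exp_freq_mul_ne_one hα hk)
        field_simp
        ring
  exact DFunLike.congr_fun hcomp x

end Cohomological

end WienerSeq

/-! ### Composition -/

section RightCoeffSeries

variable (𝕜 : Type*) {𝔸 : Type*} [NontriviallyNormedField 𝕜] [NormedRing 𝔸] [NormedAlgebra 𝕜 𝔸]

/-- The power series `B ↦ ∑ Bⁿ Λₙ` in a Banach algebra, with coefficients `Λₙ` on the right. -/
noncomputable def rightCoeffSeries (Λ : ℕ → 𝔸) : FormalMultilinearSeries 𝕜 𝔸 𝔸 := fun n =>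
  ((ContinuousLinearMap.mul 𝕜 𝔸).flip (Λ n)).compContinuousMultilinearMap
    (ContinuousMultilinearMap.mkPiAlgebraFin 𝕜 n 𝔸)

variable {𝕜} {Λ : ℕ → 𝔸} {σ : ℝ}

lemma rightCoeffSeries_apply (n : ℕ) (m : Fin n → 𝔸) :
    rightCoeffSeries 𝕜 Λ n m = (List.ofFn m).prod * Λ n := by
  simp [rightCoeffSeries]

variable [NormOneClass 𝔸]

lemma norm_rightCoeffSeries_le (n : ℕ) : ‖rightCoeffSeries 𝕜 Λ n‖ ≤ ‖Λ n‖ := by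
  refine ContinuousMultilinearMap.opNorm_le_bound (norm_nonneg _) fun m => ?_
  have hprod : ‖(List.ofFn m).prod‖ ≤ ∏ i, ‖m i‖ := by
    simpa using (ContinuousMultilinearMap.mkPiAlgebraFin 𝕜 n 𝔸).le_of_opNorm_le (C := 1)
      (by simp) m
  rw [rightCoeffSeries_apply, mul_comm ‖Λ n‖]
  exact (norm_mul_le _ _).trans (by gcongr)

lemma ofReal_le_radius_rightCoeffSeries (hσ : 0 < σ) (hΛ : ∀ n, ‖Λ n‖ ≤ σ⁻¹ ^ n) :
    ENNReal.ofReal σ ≤ (rightCoeffSeries 𝕜 Λ).radius := by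
  refine FormalMultilinearSeries.le_radius_of_bound _ 1 fun n => ?_
  rw [Real.coe_toNNReal _ hσ.le]
  calc _ ≤ σ⁻¹ ^ n * σ ^ n := by
        gcongr
        exact (norm_rightCoeffSeries_le n).trans (hΛ n)
    _ = 1 := by rw [← mul_pow, inv_mul_cancel₀ hσ.ne', one_pow]

variable [CompleteSpace 𝔸]

lemma hasFPowerSeriesOnBall_rightCoeffSeries (hσ : 0 < σ) (hΛ : ∀ n, ‖Λ n‖ ≤ σ⁻¹ ^ n) :
    HasFPowerSeriesOnBall (rightCoeffSeries 𝕜 Λ).sum (rightCoeffSeries 𝕜 Λ) 0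
      (ENNReal.ofReal σ) :=
  have hpos : 0 < ENNReal.ofReal σ := ENNReal.ofReal_pos.2 hσ
  have hradius := ofReal_le_radius_rightCoeffSeries (𝕜 := 𝕜) hσ hΛ
  ((rightCoeffSeries 𝕜 Λ).hasFPowerSeriesOnBall (hpos.trans_le hradius)).mono hpos hradius

lemma hasSum_rightCoeffSeries (hσ : 0 < σ) (hΛ : ∀ n, ‖Λ n‖ ≤ σ⁻¹ ^ n) {B : 𝔸} (hB : ‖B‖ < σ) :
    HasSum (fun n => B ^ n * Λ n) ((rightCoeffSeries 𝕜 Λ).sum B) := by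
  have hmem : B ∈ Metric.eball (0 : 𝔸) (ENNReal.ofReal σ) := by
    rw [Metric.mem_eball, edist_zero_right, ← ofReal_norm]
    exact (ENNReal.ofReal_lt_ofReal_iff hσ).2 hB
  simpa [rightCoeffSeries_apply] using
    (hasFPowerSeriesOnBall_rightCoeffSeries (𝕜 := 𝕜) hσ hΛ).hasSum hmem

end RightCoeffSeries

namespace WienerSeq

open scoped ContDiff

/-- The composition operator `x ↦ x ∘ (id + a)` from functions on the strip of width `δ + σ` to
functions on the strip of width `δ`, defined through the Taylor series
`x ∘ (id + a) = ∑ aⁿ x⁽ⁿ⁾ / n!`, which converges for `‖a‖ < σ`. -/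
noncomputable def compOp (δ σ : ℝ) (a : WienerSeq) : WienerSeq →L[ℂ] WienerSeq :=
  (rightCoeffSeries ℂ fun n => taylorOp n σ).sum (mulOp δ a)

section CompOp

variable {δ σ : ℝ}

lemma contDiffAt_compOp (hσ : 0 < σ) : ContDiffAt ℂ ω (compOp δ σ) 0 := by
  have hseries : ContDiffAt ℂ ω (rightCoeffSeries ℂ fun n => taylorOp n σ).sum (mulOp δ 0) := by
    rw [map_zero]
    exact (hasFPowerSeriesOnBall_rightCoeffSeries hσ (norm_taylorOp_le hσ)).analyticAt.contDiffAt
  exact hseries.comp (0 : WienerSeq) (mulOp δ).contDiff.contDiffAt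

lemma abs_im_add_evalAt_lt {z : ℂ} (hz : |z.im| ≤ δ) {a : WienerSeq} (ha : ‖a‖ < σ) :
    |(z + evalAt δ z a).im| < δ + σ := by
  rw [Complex.add_im]
  exact (abs_add_le _ _).trans_lt (add_lt_add_of_le_of_lt hz
    ((Complex.abs_im_le_norm _).trans_lt ((norm_evalAt_le hz a).trans_lt ha)))

lemma evalAt_compOp (hδ : 0 ≤ δ) (hσ : 0 < σ) {z : ℂ} (hz : |z.im| ≤ δ) {a : WienerSeq}
    (ha : ‖a‖ < σ) (x : WienerSeq) :
    evalAt δ z (compOp δ σ a x) = evalAt (δ + σ) (z + evalAt δ z a) x := by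
  have hsum := hasSum_rightCoeffSeries (𝕜 := ℂ) hσ (norm_taylorOp_le hσ)
    ((norm_mulOp_apply_le hδ a).trans_lt ha)
  have hcomp : (evalAt δ z).comp (compOp δ σ a) = evalAt (δ + σ) (z + evalAt δ z a) :=
    clm_ext fun k => by
      have hlhs := ((evalAt δ z).comp (ContinuousLinearMap.apply ℂ WienerSeq (mode k))).hasSum hsum
      have hrhs := (NormedSpace.exp_series_hasSum_exp' (𝕂 := ℂ)
        (freq k * evalAt δ z a)).mul_right (expMode (δ + σ) z k)
      rw [← Complex.exp_eq_exp_ℂ, ← expMode_add,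
        ← evalAt_mode (abs_im_add_evalAt_lt hz ha).le] at hrhs
      refine hlhs.unique ?_
      convert! hrhs using 2 with n
      simp only [ContinuousLinearMap.comp_apply, ContinuousLinearMap.apply_apply,
        mul_apply_eq_comp, evalAt_mulOp_pow hδ hz, evalAt_taylorOp_mode hσ hz, smul_eq_mul]
      ring
  exact DFunLike.congr_fun hcomp x

end CompOp

/-! ### The nonlinear equation -/

/-- The function `exp ∘ cohomologicalOp α ψ`, which is proportional to the derivative of the
conjugacy. -/
noncomputable def expCohomological (δ α : ℝ) (ψ : WienerSeq) : WienerSeq :=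
  NormedSpace.exp (mulOp δ (cohomologicalOp α ψ)) (mode 0)

/-- The derivative of the conjugacy `h`: the multiple of `expCohomological` of mean one. -/
noncomputable def conjDeriv (δ α : ℝ) (ψ : WienerSeq) : WienerSeq :=
  (coeff 0 (expCohomological δ α ψ))⁻¹ • expCohomological δ α ψ

/-- The displacement `h - id` of the conjugacy. -/
noncomputable def conjDisp (δ α : ℝ) (ψ : WienerSeq) : WienerSeq :=
  primitiveOp (conjDeriv δ α ψ)

/-- The composition `a ∘ h` of a function with the conjugacy. -/
noncomputable def compConj (δ σ α : ℝ) (a ψ : WienerSeq) : WienerSeq :=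
  compOp δ σ (conjDisp δ α ψ) a

/-- The map `(x, ψ) ↦ ψ (1 + x' ∘ h) - (x'' ∘ h) h'`. For `f = id + x` it vanishes if and only if
`ψ = (log f' ∘ h)'`. -/
noncomputable def conjEquation (δ σ α : ℝ) (p : WienerSeq × WienerSeq) : WienerSeq :=
  mulOp δ p.2 (mode 0 + compConj δ σ α (taylorOp 1 σ p.1) p.2) -
    mulOp δ (compConj δ σ α ((2 : ℂ) • taylorOp 2 σ p.1) p.2) (conjDeriv δ α p.2)

/-- The value at `0` of `f ∘ h - h ∘ R_α`, where `f = id + x`. -/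
noncomputable def conjDefect (δ σ α : ℝ) (p : WienerSeq × WienerSeq) : ℂ :=
  evalAt δ 0 (compConj δ σ α (taylorOp 0 σ p.1) p.2) + evalAt δ 0 (conjDisp δ α p.2)
    - evalAt δ α (conjDisp δ α p.2) - α

section AtZero

variable (δ α : ℝ)

lemma expCohomological_zero : expCohomological δ α 0 = mode 0 := by
  rw [expCohomological, map_zero, map_zero, NormedSpace.exp_zero, one_apply_eq_self]

lemma coeff_expCohomological_zero : coeff 0 (expCohomological δ α 0) = 1 := by
  rw [expCohomological_zero, coeff_mode, if_pos rfl]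

lemma conjDeriv_zero : conjDeriv δ α 0 = mode 0 := by
  rw [conjDeriv, coeff_expCohomological_zero, expCohomological_zero, inv_one, one_smul]

lemma conjDisp_zero : conjDisp δ α 0 = 0 := by
  rw [conjDisp, conjDeriv_zero, primitiveOp_mode, freq_zero, inv_zero, zero_smul]

lemma contDiffAt_expCohomological : ContDiffAt ℂ ω (expCohomological δ α) 0 := by
  have hexp : ContDiffAt ℂ ω (NormedSpace.exp : (WienerSeq →L[ℂ] WienerSeq) → _)
      (mulOp δ (cohomologicalOp α 0)) := (NormedSpace.exp_analytic (𝕂 := ℂ) _).contDiffAt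
  have hop : ContDiffAt ℂ ω (fun ψ => NormedSpace.exp (mulOp δ (cohomologicalOp α ψ))) 0 :=
    hexp.comp (0 : WienerSeq) ((mulOp δ).comp (cohomologicalOp α)).contDiff.contDiffAt
  exact hop.clm_apply contDiffAt_const

lemma contDiffAt_conjDeriv : ContDiffAt ℂ ω (conjDeriv δ α) 0 := by
  have hexp := contDiffAt_expCohomological δ α
  have hcoeff : ContDiffAt ℂ ω (fun ψ => coeff 0 (expCohomological δ α ψ)) 0 :=
    (coeff 0).contDiff.contDiffAt.comp (0 : WienerSeq) hexp
  exact (hcoeff.inv (by simp [coeff_expCohomological_zero])).smul hexp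

lemma contDiffAt_conjDisp : ContDiffAt ℂ ω (conjDisp δ α) 0 :=
  primitiveOp.contDiff.contDiffAt.comp (0 : WienerSeq) (contDiffAt_conjDeriv δ α)

variable {σ : ℝ}

lemma contDiffAt_compConj (hσ : 0 < σ) (x₀ : WienerSeq) (L : WienerSeq →L[ℂ] WienerSeq) :
    ContDiffAt ℂ ω (fun p : WienerSeq × WienerSeq => compConj δ σ α (L p.1) p.2) (x₀, 0) := by
  have hcomp : ContDiffAt ℂ ω (compOp δ σ) (conjDisp δ α 0) := by
    rw [conjDisp_zero]
    exact contDiffAt_compOp hσ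
  have hop : ContDiffAt ℂ ω (fun ψ => compOp δ σ (conjDisp δ α ψ)) 0 :=
    hcomp.comp (0 : WienerSeq) (contDiffAt_conjDisp δ α)
  exact (ContDiffAt.comp (x₀, (0 : WienerSeq)) hop contDiffAt_snd).clm_apply
    (L.comp (ContinuousLinearMap.fst ℂ WienerSeq WienerSeq)).contDiff.contDiffAt

lemma contDiffAt_conjEquation (hσ : 0 < σ) (x₀ : WienerSeq) :
    ContDiffAt ℂ ω (conjEquation δ σ α) (x₀, 0) := by
  have hmul : ContDiffAt ℂ ω (fun p : WienerSeq × WienerSeq => mulOp δ p.2) (x₀, 0) :=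
    ((mulOp δ).comp (ContinuousLinearMap.snd ℂ WienerSeq WienerSeq)).contDiff.contDiffAt
  have hderiv : ContDiffAt ℂ ω (fun p : WienerSeq × WienerSeq => conjDeriv δ α p.2) (x₀, 0) :=
    (contDiffAt_conjDeriv δ α).comp (x₀, (0 : WienerSeq)) contDiffAt_snd
  have hmulComp : ContDiffAt ℂ ω (fun p : WienerSeq × WienerSeq =>
      mulOp δ (compConj δ σ α (((2 : ℂ) • taylorOp 2 σ) p.1) p.2)) (x₀, 0) :=
    (mulOp δ).contDiff.contDiffAt.comp (x₀, (0 : WienerSeq)) (contDiffAt_compConj δ α hσ x₀ _)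
  exact (hmul.clm_apply (contDiffAt_const.add (contDiffAt_compConj δ α hσ x₀ _))).sub
    (hmulComp.clm_apply hderiv)

lemma contDiffAt_conjDefect (hσ : 0 < σ) (x₀ : WienerSeq) :
    ContDiffAt ℂ ω (conjDefect δ σ α) (x₀, 0) := by
  have hdisp (z : ℂ) : ContDiffAt ℂ ω
      (fun p : WienerSeq × WienerSeq => evalAt δ z (conjDisp δ α p.2)) (x₀, 0) :=
    (evalAt δ z).contDiff.contDiffAt.comp (x₀, (0 : WienerSeq))
      (ContDiffAt.comp (x₀, (0 : WienerSeq)) (g := conjDisp δ α) (contDiffAt_conjDisp δ α)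
        contDiffAt_snd)
  have hcomp := (evalAt δ 0).contDiff.contDiffAt.comp (x₀, (0 : WienerSeq))
    (contDiffAt_compConj δ α hσ x₀ (taylorOp 0 σ))
  exact ((hcomp.add (hdisp 0)).sub (hdisp α)).sub contDiffAt_const

end AtZero

section Constants

variable {δ σ : ℝ}

lemma conjEquation_const (hδ : 0 ≤ δ) (hσ : 0 < σ) (α : ℝ) (c : ℂ) (ψ : WienerSeq) :
    conjEquation δ σ α (c • mode 0, ψ) = ψ := by
  simp only [conjEquation, compConj, map_smul, taylorOp_mode_zero one_ne_zero hσ,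
    taylorOp_mode_zero two_ne_zero hσ, smul_zero, map_zero, add_zero, zero_apply, sub_zero]
  exact mulOp_apply_mode_zero hδ ψ

lemma conjDefect_const (hδ : 0 ≤ δ) (hσ : 0 < σ) (α : ℝ) (c : ℂ) :
    conjDefect δ σ α (c • mode 0, 0) = c - α := by
  have hzero : |(0 : ℂ).im| ≤ δ := by simpa
  have hcomp := evalAt_compOp hδ hσ hzero (a := 0) (by simpa) (taylorOp 0 σ (c • mode 0))
  rw [map_zero, add_zero, evalAt_taylorOp_zero hσ (hzero.trans (by linarith)),
    map_smul (evalAt _ _), evalAt_mode_zero (hzero.trans (by linarith)), smul_eq_mul,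
    mul_one] at hcomp
  simp only [conjDefect, compConj, conjDisp_zero, hcomp, map_zero, add_zero, sub_zero]

lemma exists_conjEquation_solution (hδ : 0 ≤ δ) (hσ : 0 < σ) (α : ℝ) (c : ℂ) :
    ∃ g : WienerSeq → WienerSeq, ContDiffAt ℂ ω g (c • mode 0) ∧ g (c • mode 0) = 0 ∧
      ∀ᶠ x in nhds (c • mode 0), conjEquation δ σ α (x, g x) = 0 := by
  set x₀ : WienerSeq := c • mode 0
  have hsmooth := contDiffAt_conjEquation δ α hσ x₀
  have hpartial : fderiv ℂ (conjEquation δ σ α) (x₀, 0) ∘L .inr ℂ WienerSeq WienerSeq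
      = ContinuousLinearMap.id ℂ WienerSeq := by
    have hslice := (hsmooth.differentiableAt (by simp)).hasFDerivAt.comp (0 : WienerSeq)
      (hasFDerivAt_prodMk_right x₀ 0)
    rw [show conjEquation δ σ α ∘ (fun ψ => (x₀, ψ)) = id from
      funext (conjEquation_const hδ hσ α c)] at hslice
    exact hslice.unique (hasFDerivAt_id _)
  have hinv : (fderiv ℂ (conjEquation δ σ α) (x₀, 0) ∘L
      .inr ℂ WienerSeq WienerSeq).IsInvertible := by
    rw [hpartial]
    exact ⟨.refl ℂ WienerSeq, rfl⟩
  have hsolves := hsmooth.eventually_apply_implicitFunction (by simp) hinv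
  rw [conjEquation_const hδ hσ] at hsolves
  exact ⟨hsmooth.implicitFunction (by simp) hinv,
    hsmooth.contDiffAt_implicitFunction (by simp) hinv,
    hsmooth.implicitFunction_apply_self (by simp) hinv, hsolves⟩

end Constants

end WienerSeq

/-! ### Fourier expansion of periodic functions on a strip -/

section FourierExpansion

open WienerSeq

variable {ε r y M : ℝ} {f : ℂ → ℂ} {z : ℂ}

lemma add_one_mem_strip (hz : z ∈ Strip ε) : z + 1 ∈ Strip ε := by
  simpa [Strip] using hz

lemma add_ofReal_mem_strip (hz : z ∈ Strip ε) (x : ℝ) : z + x ∈ Strip ε := by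
  simpa [Strip] using hz

lemma ofReal_mem_strip (hε : 0 < ε) (x : ℝ) : (x : ℂ) ∈ Strip ε := by
  simpa [Strip] using hε

lemma ofReal_add_mul_I_mem_strip (hy : |y| < ε) (x : ℝ) : (x + y * Complex.I : ℂ) ∈ Strip ε := by
  simpa [Strip] using hy

lemma integral_ofReal_add_mul_I_eq (hf : DifferentiableOn ℂ f (Strip ε))
    (hper : ∀ z ∈ Strip ε, f (z + 1) = f z) (hy : |y| < ε) :
    ∫ x : ℝ in 0..1, f (x + y * Complex.I) = ∫ x : ℝ in 0..1, f x := by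
  have hmem : ∀ t ∈ uIcc 0 y, |t| < ε := fun t ht =>
    (by simpa using abs_sub_left_of_mem_uIcc ht : |t| ≤ |y|).trans_lt hy
  have hrect := Complex.integral_boundary_rect_eq_zero_of_differentiableOn f 0
    (1 + y * Complex.I) (hf.mono fun z hz => hmem _ (by simpa using hz.2))
  simp only [Complex.zero_re, Complex.zero_im, Complex.add_re, Complex.one_re, Complex.mul_re,
    Complex.ofReal_re, Complex.I_re, mul_zero, Complex.ofReal_im, Complex.I_im, mul_one, sub_self,
    add_zero, Complex.add_im, Complex.one_im, Complex.mul_im, zero_add, Complex.ofReal_zero,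
    zero_mul, Complex.ofReal_one] at hrect
  have hsides : ∫ t : ℝ in 0..y, f (1 + t * Complex.I) = ∫ t : ℝ in 0..y, f (t * Complex.I) :=
    intervalIntegral.integral_congr fun t ht => by
      have hstrip := ofReal_add_mul_I_mem_strip (hmem t ht) 0
      rw [Complex.ofReal_zero, zero_add] at hstrip
      rw [add_comm, hper _ hstrip]
  rw [hsides] at hrect
  linear_combination -hrect

/-- The `k`-th Fourier coefficient of the restriction of `f` to the real line. -/
noncomputable def realFourierCoeff (f : ℂ → ℂ) (k : ℤ) : ℂ :=
  ∫ x : ℝ in 0..1, f x * Complex.exp (-(freq k * x))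

lemma exp_freq_mul_add_one (k : ℤ) (z : ℂ) :
    Complex.exp (freq k * (z + 1)) = Complex.exp (freq k * z) := by
  rw [mul_add, Complex.exp_add, show freq k * 1 = k * (2 * Real.pi * Complex.I) by
    rw [freq]; ring, Complex.exp_int_mul_two_pi_mul_I, mul_one]

lemma norm_exp_freq_mul (k : ℤ) (z : ℂ) :
    ‖Complex.exp (freq k * z)‖ = Real.exp (-(2 * Real.pi * k * z.im)) := by
  rw [Complex.norm_exp]
  simp [freq, Complex.mul_re, Complex.mul_im]

lemma realFourierCoeff_eq_integral_add_mul_I (hf : DifferentiableOn ℂ f (Strip ε))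
    (hper : ∀ z ∈ Strip ε, f (z + 1) = f z) (hy : |y| < ε) (k : ℤ) :
    realFourierCoeff f k = ∫ x : ℝ in 0..1,
      f (x + y * Complex.I) * Complex.exp (-(freq k * (x + y * Complex.I))) := by
  refine (integral_ofReal_add_mul_I_eq (f := fun z => f z * Complex.exp (-(freq k * z)))
    (hf.mul (by fun_prop)) (fun z hz => ?_) hy).symm
  rw [hper z hz, Complex.exp_neg, Complex.exp_neg, exp_freq_mul_add_one]

/-- The integral is moved to the line on which `exp (-freq k * z)` is smallest. -/
lemma norm_realFourierCoeff_le (hf : DifferentiableOn ℂ f (Strip ε))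
    (hper : ∀ z ∈ Strip ε, f (z + 1) = f z) (hr : 0 ≤ r) (hrε : r < ε)
    (hM : ∀ z, ‖f z‖ ≤ M) (k : ℤ) :
    ‖realFourierCoeff f k‖ ≤ Real.exp (-(2 * Real.pi * r * |(k : ℝ)|)) * M := by
  obtain ⟨y, hy, hky⟩ : ∃ y : ℝ, |y| = r ∧ k * y = -(r * |(k : ℝ)|) := by
    rcases le_total 0 (k : ℝ) with hk | hk
    · exact ⟨-r, by rw [abs_neg, abs_of_nonneg hr], by rw [abs_of_nonneg hk]; ring⟩
    · exact ⟨r, abs_of_nonneg hr, by rw [abs_of_nonpos hk]; ring⟩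
  rw [realFourierCoeff_eq_integral_add_mul_I hf hper (hy.trans_lt hrε)]
  refine (intervalIntegral.norm_integral_le_of_norm_le_const
    (C := Real.exp (-(2 * Real.pi * r * |(k : ℝ)|)) * M) fun x _ => ?_).trans_eq (by simp)
  rw [norm_mul, ← mul_neg, norm_exp_freq_mul, mul_comm]
  have hexponent : -(2 * Real.pi * k * (-(x + y * Complex.I : ℂ)).im)
      = -(2 * Real.pi * r * |(k : ℝ)|) := by
    simp only [Complex.neg_im, Complex.add_im, Complex.ofReal_im, Complex.mul_I_im,
      Complex.ofReal_re]
    linear_combination 2 * Real.pi * hky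
  rw [hexponent]
  gcongr
  exact hM _

lemma norm_realFourierCoeff_mul_exp_le (hf : DifferentiableOn ℂ f (Strip ε))
    (hper : ∀ z ∈ Strip ε, f (z + 1) = f z) (hr : 0 ≤ r) (hrε : r < ε)
    (hM : ∀ z, ‖f z‖ ≤ M) (z : ℂ) (k : ℤ) :
    ‖realFourierCoeff f k * Complex.exp (freq k * z)‖
      ≤ Real.exp (-(2 * Real.pi * (r - |z.im|) * |(k : ℝ)|)) * M := by
  have hM₀ : 0 ≤ M := (norm_nonneg _).trans (hM 0)
  have himk : -(k * z.im) ≤ |z.im| * |(k : ℝ)| := by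
    rw [← abs_mul, mul_comm z.im]
    exact neg_le_abs _
  calc ‖realFourierCoeff f k * Complex.exp (freq k * z)‖
      ≤ Real.exp (-(2 * Real.pi * r * |(k : ℝ)|)) * M
          * Real.exp (2 * Real.pi * (|z.im| * |(k : ℝ)|)) := by
        rw [norm_mul, norm_exp_freq_mul]
        gcongr
        · exact norm_realFourierCoeff_le hf hper hr hrε hM k
        · nlinarith [Real.pi_pos]
    _ = Real.exp (-(2 * Real.pi * (r - |z.im|) * |(k : ℝ)|)) * M := by
        rw [mul_right_comm, ← Real.exp_add]
        ring_nf

lemma summable_exp_neg_mul_abs_intCast {c : ℝ} (hc : 0 < c) :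
    Summable fun k : ℤ => Real.exp (-(c * |(k : ℝ)|)) := by
  have hnat : Summable fun n : ℕ => Real.exp (-(c * n)) :=
    ((Real.summable_exp_nat_mul_iff (a := -c)).2 (by linarith)).congr fun n => by ring_nf
  exact .of_nat_of_neg (by simpa using hnat) (by simpa using hnat)

lemma fourierCoeff_lift_eq_realFourierCoeff_mul (hf : DifferentiableOn ℂ f (Strip ε))
    (hper : ∀ z ∈ Strip ε, f (z + 1) = f z) (hy : |y| < ε)
    (hline : Function.Periodic (fun t : ℝ => f (t + y * Complex.I)) 1) (k : ℤ) :
    haveI : Fact ((0 : ℝ) < 1) := ⟨one_pos⟩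
    fourierCoeff hline.lift k
      = realFourierCoeff f k * Complex.exp (freq k * (y * Complex.I)) := by
  have : Fact ((0 : ℝ) < 1) := ⟨one_pos⟩
  rw [fourierCoeff_eq_intervalIntegral _ _ 0, realFourierCoeff_eq_integral_add_mul_I hf hper hy,
    ← intervalIntegral.integral_mul_const]
  simp only [one_div, inv_one, one_smul, zero_add]
  refine intervalIntegral.integral_congr fun t _ => ?_
  simp only [Function.Periodic.lift_coe]
  rw [fourier_coe_apply, smul_eq_mul, mul_assoc (f _), ← Complex.exp_add, mul_comm]
  congr 2
  rw [freq]
  push_cast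
  ring

lemma hasSum_realFourierCoeff_mul_exp (hf : DifferentiableOn ℂ f (Strip ε))
    (hper : ∀ z ∈ Strip ε, f (z + 1) = f z) (hrε : r < ε) (hM : ∀ z, ‖f z‖ ≤ M)
    (hz : |z.im| < r) :
    HasSum (fun k => realFourierCoeff f k * Complex.exp (freq k * z)) (f z) := by
  have : Fact ((0 : ℝ) < 1) := ⟨one_pos⟩
  have hzε : |z.im| < ε := hz.trans hrε
  have hline : Function.Periodic (fun t : ℝ => f (t + z.im * Complex.I)) 1 := fun t => by
    simp only [← hper _ (ofReal_add_mul_I_mem_strip hzε t)]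
    congr 1
    push_cast
    ring
  have hcont : Continuous fun t : ℝ => f (t + z.im * Complex.I) :=
    hf.continuousOn.comp_continuous (by fun_prop) (ofReal_add_mul_I_mem_strip hzε)
  let F : C(AddCircle (1 : ℝ), ℂ) := ⟨hline.lift, continuous_coinduced_dom.2 hcont⟩
  have hcoeff (k : ℤ) : fourierCoeff F k
      = realFourierCoeff f k * Complex.exp (freq k * (z.im * Complex.I)) :=
    fourierCoeff_lift_eq_realFourierCoeff_mul hf hper hzε hline k
  have hsummable : Summable (fourierCoeff F) := by
    refine Summable.of_norm_bounded ((summable_exp_neg_mul_abs_intCast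
      (mul_pos Real.two_pi_pos (sub_pos.2 hz))).mul_right M) fun k => ?_
    rw [hcoeff]
    simpa using norm_realFourierCoeff_mul_exp_le hf hper ((abs_nonneg _).trans hz.le) hrε hM
      (z.im * Complex.I) k
  have hsum := has_pointwise_sum_fourier_series_of_summable hsummable (z.re : AddCircle (1 : ℝ))
  have hvalue : F (z.re : AddCircle (1 : ℝ)) = f z := congrArg f (Complex.re_add_im z)
  rw [hvalue] at hsum
  refine hsum.congr_fun fun k => ?_
  rw [hcoeff, fourier_coe_apply, smul_eq_mul, mul_assoc, ← Complex.exp_add]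
  nth_rw 1 [← Complex.re_add_im z]
  rw [freq]
  push_cast
  ring_nf

end FourierExpansion

namespace DSpace

open WienerSeq

variable {ε r s : ℝ} {z : ℂ}

open Classical in
/-- The extension by zero of an element of `DSpace ε` to `ℂ`. -/
noncomputable def extend (u : DSpace ε) (z : ℂ) : ℂ :=
  if h : z ∈ closure (Strip ε) then (u : StripFun ε) ⟨z, h⟩ else 0

lemma extend_apply (u : DSpace ε) (hz : z ∈ Strip ε) :
    extend u z = (u : StripFun ε) ⟨z, subset_closure hz⟩ :=
  dif_pos _

lemma Fmap_eq_add_extend (u : DSpace ε) (z : ℂ) : Fmap ε u z = z + extend u z := by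
  rw [Fmap, extend]
  split_ifs <;> simp

lemma differentiableOn_extend (u : DSpace ε) : DifferentiableOn ℂ (extend u) (Strip ε) := by
  obtain ⟨g, hg, hgu⟩ := u.2.1
  exact hg.congr fun z hz => (extend_apply u hz).trans (hgu ⟨z, subset_closure hz⟩).symm

lemma extend_add_one (u : DSpace ε) (hz : z ∈ Strip ε) : extend u (z + 1) = extend u z := by
  rw [extend_apply u hz, extend_apply u (add_one_mem_strip hz)]
  exact u.2.2 z _ _

lemma norm_extend_le (u : DSpace ε) (z : ℂ) : ‖extend u z‖ ≤ ‖u‖ := by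
  rw [extend]
  split_ifs with h
  · exact BoundedContinuousFunction.norm_coe_le_norm (u : StripFun ε) ⟨z, h⟩
  · rw [norm_zero]
    exact norm_nonneg u

lemma extend_add (u v : DSpace ε) (z : ℂ) : extend (u + v) z = extend u z + extend v z := by
  simp only [extend]
  split_ifs <;> simp

lemma extend_smul (c : ℂ) (u : DSpace ε) (z : ℂ) : extend (c • u) z = c * extend u z := by
  simp only [extend]
  split_ifs <;> simp

lemma continuous_extend_ofReal (hε : 0 < ε) (u : DSpace ε) : Continuous fun x : ℝ => extend u x :=
  (differentiableOn_extend u).continuousOn.comp_continuous (by fun_prop) (ofReal_mem_strip hε)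

lemma norm_realFourierCoeff_extend_le (hr : 0 ≤ r) (hrε : r < ε) (k : ℤ) (u : DSpace ε) :
    ‖realFourierCoeff (extend u) k‖ ≤ Real.exp (-(2 * Real.pi * r * |(k : ℝ)|)) * ‖u‖ :=
  norm_realFourierCoeff_le (differentiableOn_extend u) (fun _ => extend_add_one u) hr hrε
    (norm_extend_le u) k

/-- The `k`-th Fourier coefficient as a continuous linear functional on `DSpace ε`. -/
noncomputable def fourierFunctional (hε : 0 < ε) (k : ℤ) : DSpace ε →L[ℂ] ℂ :=
  LinearMap.mkContinuous
    { toFun := fun u => realFourierCoeff (extend u) k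
      map_add' := fun u v => by
        have hint (w : DSpace ε) : IntervalIntegrable
            (fun x : ℝ => extend w x * Complex.exp (-(freq k * x))) MeasureTheory.volume 0 1 :=
          ((continuous_extend_ofReal hε w).mul (by fun_prop)).intervalIntegrable _ _
        simp only [realFourierCoeff, extend_add, add_mul]
        exact intervalIntegral.integral_add (hint u) (hint v)
      map_smul' := fun c u => by
        simp only [realFourierCoeff, extend_smul, mul_assoc, intervalIntegral.integral_const_mul,
          RingHom.id_apply, smul_eq_mul] }
    (Real.exp (-(2 * Real.pi * 0 * |(k : ℝ)|))) (norm_realFourierCoeff_extend_le le_rfl hε k)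

lemma norm_fourierFunctional_le (hr : 0 ≤ r) (hrε : r < ε) (k : ℤ) :
    ‖fourierFunctional (hr.trans_lt hrε) k‖ ≤ Real.exp (-(2 * Real.pi * r * |(k : ℝ)|)) :=
  ContinuousLinearMap.opNorm_le_bound _ (Real.exp_pos _).le
    (norm_realFourierCoeff_extend_le hr hrε k)

lemma summable_smulRight_mode {E : Type*} [NormedAddCommGroup E] [NormedSpace ℂ E] (hsr : s < r)
    {c : ℤ → E →L[ℂ] ℂ} (hc : ∀ k, ‖c k‖ ≤ Real.exp (-(2 * Real.pi * r * |(k : ℝ)|))) :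
    Summable fun k =>
      (c k).smulRight ((Real.exp (2 * Real.pi * s * |(k : ℝ)|) : ℂ) • mode k) := by
  refine Summable.of_norm_bounded (summable_exp_neg_mul_abs_intCast
    (mul_pos Real.two_pi_pos (sub_pos.2 hsr))) fun k => ?_
  rw [ContinuousLinearMap.norm_smulRight_apply, norm_smul, norm_mode, mul_one,
    Complex.norm_real, Real.norm_eq_abs, Real.abs_exp]
  calc _ ≤ Real.exp (-(2 * Real.pi * r * |(k : ℝ)|)) * Real.exp (2 * Real.pi * s * |(k : ℝ)|) := by
        gcongr
        exact hc k
    _ = Real.exp (-(2 * Real.pi * (r - s) * |(k : ℝ)|)) := by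
        rw [← Real.exp_add]
        ring_nf

/-- The element of `WienerSeq` that encodes `u` relative to the width `s`. The series converges in
operator norm for `s < ε`. -/
noncomputable def toWiener (hε : 0 < ε) (s : ℝ) : DSpace ε →L[ℂ] WienerSeq :=
  ∑' k, (fourierFunctional hε k).smulRight
    ((Real.exp (2 * Real.pi * s * |(k : ℝ)|) : ℂ) • mode k)

lemma hasSum_toWiener (hε : 0 < ε) (hs : s < ε) (u : DSpace ε) :
    HasSum (fun k => realFourierCoeff (extend u) k •
      ((Real.exp (2 * Real.pi * s * |(k : ℝ)|) : ℂ) • mode k)) (toWiener hε s u) := by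
  obtain ⟨r, hr, hrε⟩ := exists_between (max_lt hs hε)
  obtain ⟨hsr, hr₀⟩ := max_lt_iff.1 hr
  have hsum := (ContinuousLinearMap.apply ℂ WienerSeq u).hasSum
    (summable_smulRight_mode hsr (norm_fourierFunctional_le hr₀.le hrε)).hasSum
  exact hsum.congr_fun fun k => rfl

lemma evalAt_toWiener (hε : 0 < ε) (hs : s < ε) (hz : |z.im| ≤ s) (u : DSpace ε) :
    evalAt s z (toWiener hε s u) = extend u z := by
  obtain ⟨r, hsr, hrε⟩ := exists_between hs
  refine ((evalAt s z).hasSum (hasSum_toWiener hε hs u)).unique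
    ((hasSum_realFourierCoeff_mul_exp (differentiableOn_extend u) (fun _ => extend_add_one u) hrε
      (norm_extend_le u) (hz.trans_lt hsr)).congr_fun fun k => ?_)
  rw [map_smul, map_smul, evalAt_mode hz, smul_eq_mul, smul_eq_mul, expMode, freq,
    Complex.ofReal_exp, ← Complex.exp_add]
  push_cast
  ring_nf

lemma extend_rotConst (α : ℝ) (hz : z ∈ Strip ε) : extend (rotConst ε α) z = α :=
  extend_apply _ hz

lemma realFourierCoeff_extend_rotConst (hε : 0 < ε) (α : ℝ) (k : ℤ) :
    realFourierCoeff (extend (rotConst ε α)) k = if k = 0 then (α : ℂ) else 0 := by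
  simp only [realFourierCoeff, extend_rotConst α (ofReal_mem_strip hε _),
    intervalIntegral.integral_const_mul]
  split_ifs with hk
  · simp [hk, freq_zero]
  · have hperiod := exp_freq_mul_add_one k (-1)
    rw [neg_add_cancel, mul_zero, Complex.exp_zero, mul_neg_one] at hperiod
    have hint := integral_exp_mul_complex (a := 0) (b := 1) (neg_ne_zero.2 (freq_ne_zero hk))
    simp only [neg_mul] at hint
    simp [hint, ← hperiod]

lemma toWiener_rotConst (hε : 0 < ε) (hs : s < ε) (α : ℝ) :
    toWiener hε s (rotConst ε α) = (α : ℂ) • mode 0 := by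
  refine (hasSum_toWiener hε hs _).unique
    ((hasSum_ite_eq (0 : ℤ) ((α : ℂ) • mode 0)).congr_fun fun k => ?_)
  rw [realFourierCoeff_extend_rotConst hε]
  split_ifs with hk
  · simp [hk]
  · rw [zero_smul]

end DSpace

/-! ### Solutions of the nonlinear equation -/

section ConstantDerivative

variable {δ : ℝ} {G : ℂ → ℂ}

lemma eq_of_hasDerivAt_zero_strip (hG : ∀ z ∈ Strip δ, HasDerivAt G 0 z) {z w : ℂ}
    (hz : z ∈ Strip δ) (hw : w ∈ Strip δ) : G z = G w :=
  (isOpen_strip δ).is_const_of_deriv_eq_zero (convex_strip δ).isPreconnected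
    (fun z hz => (hG z hz).differentiableAt.differentiableWithinAt)
    (fun z hz => (hG z hz).deriv) hz hw

lemma eq_zero_of_hasDerivAt_const_strip (hδ : 0 < δ) {c : ℂ}
    (hG : ∀ z ∈ Strip δ, HasDerivAt G c z) (hper : G 1 = G 0) : c = 0 := by
  have hconst := eq_of_hasDerivAt_zero_strip (G := fun z => G z - c * z)
    (fun z hz => ((hG z hz).sub ((hasDerivAt_id z).const_mul c)).congr_deriv (by ring))
    (ofReal_mem_strip hδ 1) (ofReal_mem_strip hδ 0)
  simpa [hper] using hconst

end ConstantDerivative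

namespace WienerSeq

variable {δ σ α : ℝ} {x ψ : WienerSeq} {z : ℂ}

/-- The conjugacy `h = id + conjDisp δ α ψ`. -/
noncomputable def conjMap (δ α : ℝ) (ψ : WienerSeq) (z : ℂ) : ℂ := z + evalAt δ z (conjDisp δ α ψ)

lemma conjMap_add_one (δ α : ℝ) (ψ : WienerSeq) (z : ℂ) :
    conjMap δ α ψ (z + 1) = conjMap δ α ψ z + 1 := by
  rw [conjMap, conjMap, evalAt_add_one, add_right_comm]

lemma hasDerivAt_conjMap (hcoeff : coeff 0 (expCohomological δ α ψ) ≠ 0) (hz : z ∈ Strip δ) :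
    HasDerivAt (conjMap δ α ψ) (evalAt δ z (conjDeriv δ α ψ)) z := by
  have hmean : coeff 0 (conjDeriv δ α ψ) = 1 := by
    rw [conjDeriv, map_smul, smul_eq_mul, inv_mul_cancel₀ hcoeff]
  have hderiv := (hasDerivAt_id z).add (hasDerivAt_evalAt hz (conjDisp δ α ψ))
  rwa [conjDisp, evalDeriv_primitiveOp hz, hmean, add_sub_cancel] at hderiv

lemma evalAt_conjDeriv (hδ : 0 ≤ δ) (hz : |z.im| ≤ δ) :
    evalAt δ z (conjDeriv δ α ψ) = (coeff 0 (expCohomological δ α ψ))⁻¹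
      * Complex.exp (evalAt δ z (cohomologicalOp α ψ)) := by
  rw [conjDeriv, map_smul, smul_eq_mul]
  congr 1
  rw [expCohomological, evalAt_exp_mulOp hδ hz, evalAt_mode_zero hz, mul_one]

lemma evalAt_conjDeriv_add (hα : BadlyApproximable α) (hz : z ∈ Strip δ) :
    evalAt δ (z + α) (conjDeriv δ α ψ)
      = Complex.exp (evalAt δ z (primitiveOp ψ)) * evalAt δ z (conjDeriv δ α ψ) := by
  have hz' : |z.im| ≤ δ := le_of_lt hz
  have hδ : 0 ≤ δ := (abs_nonneg _).trans hz'
  rw [evalAt_conjDeriv hδ (le_of_lt (add_ofReal_mem_strip hz α)), evalAt_conjDeriv hδ hz',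
    evalAt_add_cohomologicalOp hα hz', Complex.exp_add]
  ring

/-- A solution `(x, ψ)` of the equation for the conjugacy of `f = id + x` to a rotation, together
with the conditions under which the equation has its intended meaning: the normalisation of
`conjDeriv` is possible, the series defining the compositions with `h` converge, and
`|f' ∘ h - 1| < 1`. -/
structure IsConjSolution (δ σ α : ℝ) (x ψ : WienerSeq) : Prop where
  equation : conjEquation δ σ α (x, ψ) = 0
  coeff_ne_zero : coeff 0 (expCohomological δ α ψ) ≠ 0
  norm_conjDisp_lt : ‖conjDisp δ α ψ‖ < σ
  norm_compConj_lt : ‖compConj δ σ α (taylorOp 1 σ x) ψ‖ < 1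

namespace IsConjSolution

lemma abs_im_conjMap_lt (hsol : IsConjSolution δ σ α x ψ) (hz : z ∈ Strip δ) :
    |(conjMap δ α ψ z).im| < δ + σ :=
  abs_im_add_evalAt_lt (le_of_lt hz) hsol.norm_conjDisp_lt

lemma evalAt_compConj (hsol : IsConjSolution δ σ α x ψ) (hσ : 0 < σ) (hz : z ∈ Strip δ)
    (a : WienerSeq) : evalAt δ z (compConj δ σ α a ψ) = evalAt (δ + σ) (conjMap δ α ψ z) a :=
  evalAt_compOp ((abs_nonneg _).trans (le_of_lt hz)) hσ (le_of_lt hz) hsol.norm_conjDisp_lt a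

lemma hasDerivAt_evalAt_conjMap (hsol : IsConjSolution δ σ α x ψ) {r : ℝ} (hr : δ + σ ≤ r)
    (hz : z ∈ Strip δ) (a : WienerSeq) :
    HasDerivAt (fun z => evalAt r (conjMap δ α ψ z) a)
      (evalDeriv r (conjMap δ α ψ z) a * evalAt δ z (conjDeriv δ α ψ)) z :=
  (hasDerivAt_evalAt ((hsol.abs_im_conjMap_lt hz).trans_le hr) a).comp z
    (hasDerivAt_conjMap hsol.coeff_ne_zero hz)

lemma evalAt_mul_one_add (hsol : IsConjSolution δ σ α x ψ) (hσ : 0 < σ) (hz : z ∈ Strip δ) :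
    evalAt δ z ψ * (1 + evalAt (δ + σ) (conjMap δ α ψ z) (taylorOp 1 σ x))
      = evalDeriv (δ + σ) (conjMap δ α ψ z) (taylorOp 1 σ x) * evalAt δ z (conjDeriv δ α ψ) := by
  have hz' : |z.im| ≤ δ := le_of_lt hz
  have hδ : 0 ≤ δ := (abs_nonneg _).trans hz'
  have heq := congrArg (evalAt δ z) hsol.equation
  rw [conjEquation, map_sub, map_zero, evalAt_mulOp hδ hz', evalAt_mulOp hδ hz', map_add,
    evalAt_mode_zero hz', hsol.evalAt_compConj hσ hz, hsol.evalAt_compConj hσ hz, map_smul,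
    smul_eq_mul, two_mul_evalAt_taylorOp_two hσ (hsol.abs_im_conjMap_lt hz)] at heq
  exact sub_eq_zero.1 heq

lemma one_add_mem_slitPlane (hsol : IsConjSolution δ σ α x ψ) (hσ : 0 < σ) (hz : z ∈ Strip δ) :
    1 + evalAt (δ + σ) (conjMap δ α ψ z) (taylorOp 1 σ x) ∈ Complex.slitPlane := by
  rw [← hsol.evalAt_compConj hσ hz]
  exact Complex.mem_slitPlane_of_norm_lt_one
    ((norm_evalAt_le (le_of_lt hz) _).trans_lt hsol.norm_compConj_lt)

lemma hasDerivAt_log (hsol : IsConjSolution δ σ α x ψ) (hσ : 0 < σ) (hz : z ∈ Strip δ) :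
    HasDerivAt (fun z => Complex.log (1 + evalAt (δ + σ) (conjMap δ α ψ z) (taylorOp 1 σ x)))
      (evalAt δ z ψ) z := by
  have hslit := hsol.one_add_mem_slitPlane hσ hz
  have hderiv := ((hsol.hasDerivAt_evalAt_conjMap le_rfl hz (taylorOp 1 σ x)).const_add 1).clog
    hslit
  rwa [← hsol.evalAt_mul_one_add hσ hz,
    mul_div_cancel_right₀ _ (Complex.slitPlane_ne_zero hslit)] at hderiv

lemma hasDerivAt_log_sub_primitive (hsol : IsConjSolution δ σ α x ψ) (hσ : 0 < σ)
    (hz : z ∈ Strip δ) :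
    HasDerivAt (fun z => Complex.log (1 + evalAt (δ + σ) (conjMap δ α ψ z) (taylorOp 1 σ x))
      - evalAt δ z (primitiveOp ψ)) (coeff 0 ψ) z := by
  have hderiv := (hsol.hasDerivAt_log hσ hz).sub (hasDerivAt_evalAt hz (primitiveOp ψ))
  rwa [evalDeriv_primitiveOp hz, sub_sub_cancel] at hderiv

lemma exists_one_add_eq_mul_exp (hsol : IsConjSolution δ σ α x ψ) (hδ : 0 < δ) (hσ : 0 < σ) :
    ∃ q : ℂ, ∀ z ∈ Strip δ, 1 + evalAt (δ + σ) (conjMap δ α ψ z) (taylorOp 1 σ x)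
      = q * Complex.exp (evalAt δ z (primitiveOp ψ)) := by
  set G : ℂ → ℂ := fun z =>
    Complex.log (1 + evalAt (δ + σ) (conjMap δ α ψ z) (taylorOp 1 σ x))
      - evalAt δ z (primitiveOp ψ) with hG
  have hderiv (z : ℂ) (hz : z ∈ Strip δ) : HasDerivAt G (coeff 0 ψ) z :=
    hsol.hasDerivAt_log_sub_primitive hσ hz
  have hmean : coeff 0 ψ = 0 := eq_zero_of_hasDerivAt_const_strip hδ hderiv <| by
    rw [← zero_add (1 : ℂ)]
    simp only [hG, conjMap_add_one, evalAt_add_one]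
  refine ⟨Complex.exp (G 0), fun z hz => ?_⟩
  have hconst : G z = G 0 := eq_of_hasDerivAt_zero_strip (fun z hz => hmean ▸ hderiv z hz) hz
    (ofReal_mem_strip hδ 0)
  rw [← hconst, ← Complex.exp_add, hG, sub_add_cancel,
    Complex.exp_log (Complex.slitPlane_ne_zero (hsol.one_add_mem_slitPlane hσ hz))]

lemma hasDerivAt_conjMap_add_evalAt (hsol : IsConjSolution δ σ α x ψ) (hσ : 0 < σ)
    (hz : z ∈ Strip δ) :
    HasDerivAt (fun z => conjMap δ α ψ z + evalAt (δ + σ + σ) (conjMap δ α ψ z) x)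
      ((1 + evalAt (δ + σ) (conjMap δ α ψ z) (taylorOp 1 σ x)) * evalAt δ z (conjDeriv δ α ψ))
      z := by
  rw [evalAt_taylorOp_one hσ (hsol.abs_im_conjMap_lt hz).le, one_add_mul]
  exact (hasDerivAt_conjMap hsol.coeff_ne_zero hz).add
    (hsol.hasDerivAt_evalAt_conjMap (le_add_of_nonneg_right hσ.le) hz x)

lemma conjDefect_eq (hsol : IsConjSolution δ σ α x ψ) (hδ : 0 < δ) (hσ : 0 < σ) :
    conjDefect δ σ α (x, ψ) = conjMap δ α ψ 0
      + evalAt (δ + σ + σ) (conjMap δ α ψ 0) x - conjMap δ α ψ α := by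
  have hzero : (0 : ℂ) ∈ Strip δ := ofReal_mem_strip hδ 0
  rw [conjDefect, hsol.evalAt_compConj hσ hzero,
    evalAt_taylorOp_zero hσ (hsol.abs_im_conjMap_lt hzero).le]
  simp only [conjMap]
  ring

/-- Both sides have the same derivative up to a constant factor, which is `1` because both commute
with the translation by `1`. -/
lemma conjMap_add_evalAt (hsol : IsConjSolution δ σ α x ψ) (hα : BadlyApproximable α)
    (hδ : 0 < δ) (hσ : 0 < σ) (hz : z ∈ Strip δ) :
    conjMap δ α ψ z + evalAt (δ + σ + σ) (conjMap δ α ψ z) x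
      = conjMap δ α ψ (z + α) + conjDefect δ σ α (x, ψ) := by
  obtain ⟨q, hq⟩ := hsol.exists_one_add_eq_mul_exp hδ hσ
  set G : ℂ → ℂ := fun z => conjMap δ α ψ z + evalAt (δ + σ + σ) (conjMap δ α ψ z) x
    - q * conjMap δ α ψ (z + α) with hG
  have hzero : (0 : ℂ) ∈ Strip δ := ofReal_mem_strip hδ 0
  have hderiv (z : ℂ) (hz : z ∈ Strip δ) : HasDerivAt G 0 z := by
    have hshift : HasDerivAt (fun z => conjMap δ α ψ (z + α))
        (evalAt δ (z + α) (conjDeriv δ α ψ)) z :=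
      (hasDerivAt_conjMap hsol.coeff_ne_zero (add_ofReal_mem_strip hz α)).comp_add_const z _
    convert! (hsol.hasDerivAt_conjMap_add_evalAt hσ hz).sub (hshift.const_mul q) using 1
    rw [hq z hz, evalAt_conjDeriv_add hα hz]
    ring
  have hq_one : q = 1 := by
    have hperiod := eq_of_hasDerivAt_zero_strip hderiv (add_one_mem_strip hzero) hzero
    simp only [hG, add_right_comm (0 : ℂ) 1, conjMap_add_one, evalAt_add_one] at hperiod
    linear_combination -hperiod
  have hconst := eq_of_hasDerivAt_zero_strip hderiv hz hzero
  simp only [hG, hq_one, one_mul, zero_add] at hconst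
  rw [hsol.conjDefect_eq hδ hσ]
  linear_combination hconst

end IsConjSolution

end WienerSeq

/-! ### Conjugacies close to the identity -/

/-- `Φ` linearizes `F` on the strip of width `r`: it is a univalent lift of a map of the cylinder
and conjugates `F` to the rotation by `α`. -/
structure IsLinearization (r α : ℝ) (F Φ : ℂ → ℂ) : Prop where
  differentiableOn : DifferentiableOn ℂ Φ (Strip r)
  injOn : InjOn Φ (Strip r)
  map_add_one : ∀ z ∈ Strip r, Φ (z + 1) = Φ z + 1
  map_apply : ∀ z ∈ Strip r, F z ∈ Strip r → Φ (F z) = Φ z + α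

lemma linearizable_iff {ε α : ℝ} {u : DSpace ε} :
    Linearizable ε α u ↔ ∃ Φ, IsLinearization (ε / 2) α (Fmap ε u) Φ :=
  ⟨fun ⟨Φ, hdiff, hinj, hone, happly⟩ => ⟨Φ, hdiff, hinj, hone, happly⟩,
    fun ⟨Φ, hdiff, hinj, hone, happly⟩ => ⟨Φ, hdiff, hinj, hone, happly⟩⟩

/-- `H` is a holomorphic lift of a map of the cylinder of width `δ`, and it is `d`-close to the
identity together with its derivative. -/
structure IsNearIdentity (δ d : ℝ) (H : ℂ → ℂ) : Prop where
  differentiableOn : DifferentiableOn ℂ H (Strip δ)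
  norm_deriv_sub_one_le : ∀ z ∈ Strip δ, ‖deriv H z - 1‖ ≤ d
  norm_sub_le : ∀ z ∈ Strip δ, ‖H z - z‖ ≤ d
  map_add_one : ∀ z ∈ Strip δ, H (z + 1) = H z + 1

namespace IsNearIdentity

variable {δ d r : ℝ} {H : ℂ → ℂ} {z : ℂ}

lemma differentiableAt (hH : IsNearIdentity δ d H) (hz : z ∈ Strip δ) : DifferentiableAt ℂ H z :=
  hH.differentiableOn.differentiableAt ((isOpen_strip δ).mem_nhds hz)

lemma deriv_ne_zero (hH : IsNearIdentity δ d H) (hd : d ≤ 1 / 2) (hz : z ∈ Strip δ) :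
    deriv H z ≠ 0 := fun hzero => by
  have hnorm := hH.norm_deriv_sub_one_le z hz
  rw [hzero, zero_sub, norm_neg, norm_one] at hnorm
  linarith

lemma approximatesLinearOn (hH : IsNearIdentity δ d H) (hd : d ≤ 1 / 2) :
    ApproximatesLinearOn H (ContinuousLinearEquiv.refl ℂ ℂ : ℂ →L[ℂ] ℂ) (Strip δ) (1 / 2) :=
  ApproximatesLinearOn.approximatesLinearOn_iff_lipschitzOnWith.2 <|
    (convex_strip δ).lipschitzOnWith_of_nnnorm_hasDerivWithin_le
      (fun z hz => ((hH.differentiableAt hz).hasDerivAt.sub (hasDerivAt_id z)).hasDerivWithinAt)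
      fun z hz => (hH.norm_deriv_sub_one_le z hz).trans hd

/-- A map close to the identity, as a partial homeomorphism with source `Strip δ`. -/
noncomputable def partialHomeo (hH : IsNearIdentity δ d H) (hd : d ≤ 1 / 2) :
    OpenPartialHomeomorph ℂ ℂ :=
  (hH.approximatesLinearOn hd).toOpenPartialHomeomorph H (Strip δ)
    (.inr (by simpa using NNReal.half_lt_self one_ne_zero)) (isOpen_strip δ)

lemma strip_subset_image (hH : IsNearIdentity δ d H) (hd₀ : 0 ≤ d) (hd : d ≤ 1 / 2)
    (hδ : r + 2 * d ≤ δ) : Strip r ⊆ H '' Strip δ := fun w hw => by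
  have hball : Metric.closedBall w (2 * d) ⊆ Strip δ := fun z hz =>
    (closedBall_subset_strip hw hz).trans_le hδ
  have hw' : w ∈ Strip δ := hball (Metric.mem_closedBall_self (by positivity))
  have hnorm : (ContinuousLinearEquiv.refl ℂ ℂ).toNonlinearRightInverse.nnnorm = 1 :=
    nnnorm_one (G := ℂ →L[ℂ] ℂ)
  have hsurj := (hH.approximatesLinearOn hd).surjOn_closedBall_of_nonlinearRightInverse
    (ContinuousLinearEquiv.refl ℂ ℂ).toNonlinearRightInverse (by positivity) hball
  obtain ⟨z, hz, rfl⟩ := hsurj (by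
    rw [Metric.mem_closedBall, dist_comm, dist_eq_norm]
    refine (hH.norm_sub_le w hw').trans_eq ?_
    rw [hnorm]
    push_cast
    ring)
  exact ⟨z, hball hz, rfl⟩

lemma exists_isLinearization (hH : IsNearIdentity δ d H) (hd₀ : 0 ≤ d) (hd : d ≤ 1 / 2)
    (hδ : r + 2 * d ≤ δ) {α : ℝ} {F : ℂ → ℂ} (hF : ∀ z ∈ Strip δ, F (H z) = H (z + α)) :
    ∃ Φ, IsLinearization r α F Φ := by
  set e := hH.partialHomeo hd
  have hinv (z : ℂ) (hz : z ∈ Strip δ) : e.symm (H z) = z := e.left_inv hz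
  refine ⟨e.symm, ⟨fun w hw => ?_, e.symm.injOn.mono (hH.strip_subset_image hd₀ hd hδ),
    fun w hw => ?_, fun w hw _ => ?_⟩⟩
  all_goals obtain ⟨z, hz, rfl⟩ := hH.strip_subset_image hd₀ hd hδ hw
  · have hderiv : HasDerivAt e (deriv H z) (e.symm (H z)) := by
      rw [hinv z hz]
      exact (hH.differentiableAt hz).hasDerivAt
    exact (e.hasDerivAt_symm (e.map_source hz) (hH.deriv_ne_zero hd hz)
      hderiv).differentiableAt.differentiableWithinAt
  · rw [← hH.map_add_one z hz, hinv _ (add_one_mem_strip hz), hinv z hz]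
  · rw [hF z hz, hinv _ (add_ofReal_mem_strip hz α), hinv z hz]

end IsNearIdentity

/-! ### Bloch's theorem and univalent lifts -/

section Bloch

open Metric

section TaylorBound

variable {F : Type*} [NormedAddCommGroup F] [NormedSpace ℂ F] [CompleteSpace F] {f : ℂ → F}
  {a z : ℂ} {t B : ℝ}

lemma norm_deriv_sub_deriv_le (hf : DifferentiableOn ℂ f (ball a t))
    (hB : ∀ w ∈ ball a t, ‖deriv f w‖ ≤ B) (hz : z ∈ ball a t) :
    ‖deriv f z - deriv f a‖ ≤ 2 * B / t * ‖z - a‖ := by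
  have ha : a ∈ ball a t := mem_ball_self (dist_nonneg.trans_lt hz)
  have hmaps : MapsTo (deriv f) (ball a t) (closedBall (deriv f a) (2 * B)) := fun w hw => by
    rw [mem_closedBall, dist_eq_norm, two_mul]
    exact norm_sub_le_of_le (hB w hw) (hB a ha)
  simpa only [dist_eq_norm] using
    Complex.dist_le_div_mul_dist_of_mapsTo_ball (hf.deriv isOpen_ball) hmaps hz

lemma norm_sub_sub_smul_deriv_le (hf : DifferentiableOn ℂ f (ball a t))
    (hB : ∀ w ∈ ball a t, ‖deriv f w‖ ≤ B) (hz : z ∈ ball a t) :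
    ‖f z - f a - (z - a) • deriv f a‖ ≤ 2 * B / t * ‖z - a‖ ^ 2 := by
  have ht : 0 < t := dist_nonneg.trans_lt hz
  have hB₀ : 0 ≤ B := (norm_nonneg _).trans (hB a (mem_ball_self ht))
  have hsub : closedBall a ‖z - a‖ ⊆ ball a t :=
    closedBall_subset_ball (by rwa [← dist_eq_norm])
  have hmean := (convex_closedBall a ‖z - a‖).norm_image_sub_le_of_norm_hasDerivWithin_le
    (f := fun w => f w - (w - a) • deriv f a) (f' := fun w => deriv f w - deriv f a)
    (C := 2 * B / t * ‖z - a‖)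
    (fun w hw => by
      have hderiv := ((hf.differentiableAt (isOpen_ball.mem_nhds (hsub hw))).hasDerivAt).sub
        (((hasDerivAt_id w).sub_const a).smul_const (deriv f a))
      rw [one_smul] at hderiv
      exact hderiv.hasDerivWithinAt)
    (fun w hw => (norm_deriv_sub_deriv_le hf hB (hsub hw)).trans <| by
      gcongr
      exact mem_closedBall_iff_norm.1 hw)
    (mem_closedBall_self (norm_nonneg _)) (mem_closedBall_iff_norm.2 le_rfl)
  calc ‖f z - f a - (z - a) • deriv f a‖
      = ‖f z - (z - a) • deriv f a - (f a - (a - a) • deriv f a)‖ := by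
        rw [sub_self, zero_smul, sub_zero, sub_right_comm]
    _ ≤ 2 * B / t * ‖z - a‖ * ‖z - a‖ := hmean
    _ = 2 * B / t * ‖z - a‖ ^ 2 := by ring

end TaylorBound

/-- The point `a` maximises `‖g z‖ * (R - dist z z₀)`. -/
lemma exists_closedBall_norm_le_two_mul {X F : Type*} [PseudoMetricSpace X] [ProperSpace X]
    [NormedAddCommGroup F] {g : X → F} {z₀ : X} {R : ℝ} (hR : 0 < R)
    (hg : ContinuousOn g (closedBall z₀ R)) (hne : g z₀ ≠ 0) :
    ∃ a t, 0 < t ∧ closedBall a t ⊆ closedBall z₀ R ∧ (∀ z ∈ closedBall a t, ‖g z‖ ≤ 2 * ‖g a‖) ∧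
      R * ‖g z₀‖ ≤ 2 * t * ‖g a‖ := by
  have hcenter : z₀ ∈ closedBall z₀ R := mem_closedBall_self hR.le
  obtain ⟨a, -, hmax⟩ := (isCompact_closedBall z₀ R).exists_isMaxOn ⟨z₀, hcenter⟩
    (hg.norm.mul (f := fun z => ‖g z‖) (g := fun z => R - dist z z₀) (by fun_prop))
  obtain ⟨t, ht⟩ : ∃ t, R - dist a z₀ = 2 * t := ⟨(R - dist a z₀) / 2, by ring⟩
  have hle (z : X) (hz : z ∈ closedBall z₀ R) : ‖g z‖ * (R - dist z z₀) ≤ ‖g a‖ * (2 * t) :=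
    ht ▸ hmax hz
  have hbound : R * ‖g z₀‖ ≤ 2 * t * ‖g a‖ := by
    have := hle z₀ hcenter
    rw [dist_self] at this
    linarith
  have hpos : 0 < 2 * t * ‖g a‖ := (mul_pos hR (norm_pos_iff.2 hne)).trans_le hbound
  have ht₀ : 0 < t := by linarith [pos_of_mul_pos_left hpos (norm_nonneg _)]
  have hsub : closedBall a t ⊆ closedBall z₀ R := closedBall_subset_closedBall' (by linarith)
  refine ⟨a, t, ht₀, hsub, fun z hz => le_of_mul_le_mul_right ?_ ht₀, hbound⟩
  calc ‖g z‖ * t ≤ ‖g z‖ * (R - dist z z₀) := by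
        gcongr
        linarith [dist_triangle z a z₀, mem_closedBall.1 hz]
    _ ≤ 2 * ‖g a‖ * t := (hle z (hsub hz)).trans_eq (by ring)

lemma norm_deriv_mul_le_norm_sub {f : ℂ → ℂ} {a z : ℂ} {t : ℝ}
    (hf : DifferentiableOn ℂ f (ball a t)) (hbound : ∀ w ∈ ball a t, ‖deriv f w‖ ≤ 2 * ‖deriv f a‖)
    (hz : ‖z - a‖ ≤ t / 8) : ‖deriv f a‖ / 2 * ‖z - a‖ ≤ ‖f z - f a‖ := by
  rcases eq_or_ne z a with rfl | hne
  · simp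
  have ht : 0 < t := by linarith [norm_pos_iff.2 (sub_ne_zero.2 hne)]
  have htaylor := norm_sub_sub_smul_deriv_le hf hbound (mem_ball_iff_norm.2 (by linarith))
  have hquad : 2 * (2 * ‖deriv f a‖) / t * ‖z - a‖ ^ 2 ≤ ‖deriv f a‖ / 2 * ‖z - a‖ :=
    calc 2 * (2 * ‖deriv f a‖) / t * ‖z - a‖ ^ 2
        = 2 * (2 * ‖deriv f a‖) / t * (‖z - a‖ * ‖z - a‖) := by ring
      _ ≤ 2 * (2 * ‖deriv f a‖) / t * (t / 8 * ‖z - a‖) := by gcongr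
      _ = ‖deriv f a‖ / 2 * ‖z - a‖ := by field_simp; ring
  have htri := norm_sub_norm_le ((z - a) • deriv f a) (f z - f a)
  rw [norm_sub_rev ((z - a) • deriv f a), norm_smul] at htri
  linarith

/-- **Bloch's theorem**, with a non-optimal constant. -/
lemma exists_ball_subset_image_closedBall {U : Set ℂ} (hU : IsOpen U) {f : ℂ → ℂ}
    (hf : DifferentiableOn ℂ f U) {z₀ : ℂ} {R : ℝ} (hR : 0 < R) (hsub : closedBall z₀ R ⊆ U)
    (hne : deriv f z₀ ≠ 0) :
    ∃ a ∈ closedBall z₀ R, ball (f a) (R * ‖deriv f z₀‖ / 64) ⊆ f '' closedBall z₀ R := by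
  obtain ⟨a, t, ht, hat, hbound, hprod⟩ := exists_closedBall_norm_le_two_mul hR
    ((hf.deriv hU).continuousOn.mono hsub) hne
  have hderiv : 0 < ‖deriv f a‖ :=
    pos_of_mul_pos_right ((mul_pos hR (norm_pos_iff.2 hne)).trans_le hprod) (by positivity)
  have hmul (z : ℂ) (hz : ‖z - a‖ ≤ t / 8) : ‖deriv f a‖ / 2 * ‖z - a‖ ≤ ‖f z - f a‖ :=
    norm_deriv_mul_le_norm_sub (hf.mono (ball_subset_closedBall.trans (hat.trans hsub)))
      (fun w hw => hbound w (ball_subset_closedBall hw)) hz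
  have hsmall : closedBall a (t / 8) ⊆ closedBall a t := closedBall_subset_closedBall (by linarith)
  have hcont : DiffContOnCl ℂ f (ball a (t / 8)) :=
    DifferentiableOn.diffContOnCl <| hf.mono <|
      closure_ball_subset_closedBall.trans (hsmall.trans (hat.trans hsub))
  have hnonconst : ∀ᶠ z in nhdsWithin a {a}ᶜ, f z ≠ f a := by
    filter_upwards [mem_nhdsWithin_of_mem_nhds (closedBall_mem_nhds a (by positivity : 0 < t / 8)),
      self_mem_nhdsWithin] with z hz hza heq
    have := hmul z (mem_closedBall_iff_norm.1 hz)
    rw [heq, sub_self, norm_zero] at this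
    exact this.not_gt (mul_pos (half_pos hderiv) (norm_pos_iff.2 (sub_ne_zero.2 hza)))
  have himage := hcont.ball_subset_image_closedBall (ε := ‖deriv f a‖ / 2 * (t / 8))
    (by positivity) (fun z hz => by
      rw [mem_sphere_iff_norm] at hz
      exact hz ▸ hmul z hz.le) (hnonconst.frequently.filter_mono nhdsWithin_le_nhds)
  exact ⟨a, hat (mem_closedBall_self ht.le), (ball_subset_ball (by linarith)).trans <|
    himage.trans (image_mono (hsmall.trans hat))⟩

lemma norm_deriv_le_of_injOn {U : Set ℂ} (hU : IsOpen U) {f : ℂ → ℂ}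
    (hf : DifferentiableOn ℂ f U) (hinj : InjOn f U) (hadd_mem : ∀ z ∈ U, z + 1 ∈ U)
    (hadd : ∀ z ∈ U, f (z + 1) = f z + 1) {z₀ : ℂ} {R : ℝ} (hR₀ : 0 < R) (hR : R < 1 / 2)
    (hsub : closedBall z₀ R ⊆ U) : ‖deriv f z₀‖ ≤ 64 / R := by
  by_contra! hlt
  rw [div_lt_iff₀' hR₀] at hlt
  have hne : deriv f z₀ ≠ 0 := fun hzero => by norm_num [hzero] at hlt
  obtain ⟨a, ha, himage⟩ := exists_ball_subset_image_closedBall hU hf hR₀ hsub hne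
  obtain ⟨w, hw, hfw⟩ : f a + 1 ∈ f '' closedBall z₀ R := himage <| by
    rw [mem_ball, dist_self_add_left, norm_one]
    linarith
  rw [← hadd a (hsub ha)] at hfw
  obtain rfl := hinj (hsub hw) (hadd_mem a (hsub ha)) hfw
  have hdist := dist_triangle_right (a + 1) a z₀
  rw [dist_self_add_left, norm_one] at hdist
  linarith [mem_closedBall.1 ha, mem_closedBall.1 hw]

end Bloch

/-! ### Uniqueness of the translation -/

lemma integral_sub_comp_add_eq_zero {E : Type*} [NormedAddCommGroup E] [NormedSpace ℝ E]
    {k : ℝ → E} {T : ℝ} (hk : Function.Periodic k T) (hcont : Continuous k) (α : ℝ) :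
    ∫ t in 0..T, (k t - k (t + α)) = 0 := by
  have hshift := hk.intervalIntegral_add_eq α 0
  rw [intervalIntegral.integral_sub (hcont.intervalIntegrable 0 T)
    (Continuous.intervalIntegrable (by fun_prop) 0 T),
    intervalIntegral.integral_comp_add_right, zero_add, add_comm T, hshift, zero_add, sub_self]

namespace IsNearIdentity

variable {δ d r : ℝ} {H : ℂ → ℂ}

lemma map_ofReal_mem_strip (hH : IsNearIdentity δ d H) (hδ : 0 < δ) (hd : d < r) (t : ℝ) :
    H t ∈ Strip r := by
  have him := (Complex.abs_im_le_norm _).trans (hH.norm_sub_le t (ofReal_mem_strip hδ t))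
  rw [Complex.sub_im, Complex.ofReal_im, sub_zero] at him
  exact him.trans_lt hd

lemma map_ofReal_add_mem_strip (hH : IsNearIdentity δ d H) (hδ : 0 < δ) {c : ℂ}
    (hdc : d + ‖c‖ < r) (t : ℝ) : H t + c ∈ Strip r :=
  strip_mono (sub_add_cancel r ‖c‖).le <|
    closedBall_subset_strip (hH.map_ofReal_mem_strip hδ (lt_sub_iff_add_lt.2 hdc) t)
      (mem_closedBall_iff_norm.2 (by rw [add_sub_cancel_left]))

lemma continuous_comp_ofReal (hH : IsNearIdentity δ d H) (hδ : 0 < δ) :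
    Continuous fun t : ℝ => H t :=
  hH.differentiableOn.continuousOn.comp_continuous Complex.continuous_ofReal (ofReal_mem_strip hδ)

lemma continuous_deriv_comp_ofReal (hH : IsNearIdentity δ d H) (hδ : 0 < δ) :
    Continuous fun t : ℝ => deriv H t :=
  (hH.differentiableOn.deriv (isOpen_strip δ)).continuousOn.comp_continuous
    Complex.continuous_ofReal (ofReal_mem_strip hδ)

end IsNearIdentity

namespace IsLinearization

variable {r δ d α : ℝ} {F P H : ℂ → ℂ} {c w : ℂ}

lemma norm_deriv_le (hP : IsLinearization r α F P) (hr : 0 < r) (hw : w ∈ Strip (r / 2)) :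
    ‖deriv P w‖ ≤ 64 / min (r / 2) (1 / 4) :=
  norm_deriv_le_of_injOn (isOpen_strip r) hP.differentiableOn hP.injOn
    (fun _ => add_one_mem_strip) hP.map_add_one (by positivity)
    ((min_le_right _ _).trans_lt (by norm_num))
    ((closedBall_subset_strip hw).trans
      (strip_mono (by linarith [min_le_left (r / 2) (1 / 4 : ℝ)])))

lemma norm_map_add_sub_le (hP : IsLinearization r α F P) (hr : 0 < r) {B : ℝ}
    (hB : ∀ z ∈ Strip (r / 2), ‖deriv P z‖ ≤ B) (hw : w ∈ Strip (r / 4)) (hc : ‖c‖ < r / 4) :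
    ‖P (w + c) - P w - c * deriv P w‖ ≤ 8 / r * B * ‖c‖ ^ 2 := by
  have hball : Metric.ball w (r / 4) ⊆ Strip (r / 2) :=
    Metric.ball_subset_closedBall.trans
      ((closedBall_subset_strip hw).trans (strip_mono (by linarith)))
  have htaylor := norm_sub_sub_smul_deriv_le (z := w + c)
    (hP.differentiableOn.mono (hball.trans (strip_mono (half_le_self hr.le))))
    (fun z hz => hB z (hball hz)) (by rwa [mem_ball_iff_norm, add_sub_cancel_left])
  rw [add_sub_cancel_left, smul_eq_mul] at htaylor
  exact htaylor.trans_eq (by field_simp; ring)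

lemma continuous_map_add (hP : IsLinearization r α F P) (hH : IsNearIdentity δ d H)
    (hδ : 0 < δ) (hdc : d + ‖c‖ < r) : Continuous fun t : ℝ => P (H t + c) :=
  hP.differentiableOn.continuousOn.comp_continuous ((hH.continuous_comp_ofReal hδ).add_const c)
    (hH.map_ofReal_add_mem_strip hδ hdc)

lemma continuous_map (hP : IsLinearization r α F P) (hH : IsNearIdentity δ d H) (hδ : 0 < δ)
    (hd : d < r) : Continuous fun t : ℝ => P (H t) :=
  hP.differentiableOn.continuousOn.comp_continuous (hH.continuous_comp_ofReal hδ)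
    (hH.map_ofReal_mem_strip hδ hd)

lemma continuous_deriv_mul_deriv (hP : IsLinearization r α F P) (hH : IsNearIdentity δ d H)
    (hδ : 0 < δ) (hd : d < r) : Continuous fun t : ℝ => deriv P (H t) * deriv H t :=
  ((hP.differentiableOn.deriv (isOpen_strip r)).continuousOn.comp_continuous
    (hH.continuous_comp_ofReal hδ) (hH.map_ofReal_mem_strip hδ hd)).mul
    (hH.continuous_deriv_comp_ofReal hδ)

lemma integral_deriv_mul_deriv (hP : IsLinearization r α F P) (hH : IsNearIdentity δ d H)
    (hδ : 0 < δ) (hd : d < r) : ∫ t : ℝ in 0..1, deriv P (H t) * deriv H t = 1 := by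
  have hmem := hH.map_ofReal_mem_strip hδ hd
  have hderiv (t : ℝ) : HasDerivAt (fun t : ℝ => P (H t)) (deriv P (H t) * deriv H t) t :=
    ((hP.differentiableOn.differentiableAt ((isOpen_strip r).mem_nhds (hmem t))).hasDerivAt.comp
      (t : ℂ) (hH.differentiableAt (ofReal_mem_strip hδ t)).hasDerivAt).comp_ofReal
  rw [intervalIntegral.integral_eq_sub_of_hasDerivAt (fun t _ => hderiv t)
    ((hP.continuous_deriv_mul_deriv hH hδ hd).intervalIntegrable 0 1), sub_eq_iff_eq_add',
    ← hP.map_add_one _ (hmem 0), ← hH.map_add_one _ (ofReal_mem_strip hδ 0), Complex.ofReal_zero,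
    zero_add, Complex.ofReal_one]

lemma integral_map_add_sub (hP : IsLinearization r α F P) (hH : IsNearIdentity δ d H)
    (hδ : 0 < δ) (hdc : d + ‖c‖ < r) (hF : ∀ z ∈ Strip δ, F (H z) = H (z + α) + c) :
    ∫ t : ℝ in 0..1, (P (H t + c) - P (H t)) = 0 := by
  have hmem := hH.map_ofReal_add_mem_strip hδ hdc
  have hper : Function.Periodic (fun t : ℝ => P (H t + c) - t) 1 := fun t => by
    dsimp only
    rw [Complex.ofReal_add, Complex.ofReal_one, hH.map_add_one t (ofReal_mem_strip hδ t),
      add_right_comm, hP.map_add_one _ (hmem t), add_sub_add_right_eq_sub]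
  rw [← integral_sub_comp_add_eq_zero hper
    ((hP.continuous_map_add hH hδ hdc).sub Complex.continuous_ofReal) α]
  congr 1 with t
  have hconj := hP.map_apply (H t)
    (hH.map_ofReal_mem_strip hδ (by linarith [norm_nonneg c]) t)
  rw [hF t (ofReal_mem_strip hδ t), ← Complex.ofReal_add] at hconj
  rw [hconj (hmem (t + α)), Complex.ofReal_add]
  ring

lemma norm_map_add_sub_mul_deriv_le (hP : IsLinearization r α F P) (hH : IsNearIdentity δ d H)
    (hr : 0 < r) (hδ : 0 < δ) (hd : d < r / 4) {B : ℝ} (hB : ∀ z ∈ Strip (r / 2), ‖deriv P z‖ ≤ B)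
    (hc : ‖c‖ ≤ d) (t : ℝ) :
    ‖P (H t + c) - P (H t) - c * (deriv P (H t) * deriv H t)‖ ≤ d * ((8 / r + 1) * B) * ‖c‖ := by
  have hbound := hB (H t) (hH.map_ofReal_mem_strip hδ (by linarith) t)
  have hB₀ : 0 ≤ B := (norm_nonneg _).trans hbound
  calc ‖P (H t + c) - P (H t) - c * (deriv P (H t) * deriv H t)‖
      = ‖P (H t + c) - P (H t) - c * deriv P (H t) - c * deriv P (H t) * (deriv H t - 1)‖ := by
        congr 1
        ring
    _ ≤ 8 / r * B * ‖c‖ ^ 2 + ‖c‖ * B * d := by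
        refine norm_sub_le_of_le (hP.norm_map_add_sub_le hr hB (hH.map_ofReal_mem_strip hδ hd t)
          (hc.trans_lt hd)) ?_
        rw [norm_mul, norm_mul]
        gcongr
        exact hH.norm_deriv_sub_one_le t (ofReal_mem_strip hδ t)
    _ ≤ 8 / r * B * (d * ‖c‖) + ‖c‖ * B * d := by
        rw [pow_two]
        gcongr
    _ = d * ((8 / r + 1) * B) * ‖c‖ := by ring

/-- Integrating `P (H + c) - P H ≈ c * (P ∘ H)'` over a period gives `0 ≈ c`. -/
lemma eq_zero_of_norm_le (hP : IsLinearization r α F P) (hH : IsNearIdentity δ d H)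
    (hr : 0 < r) (hδ : 0 < δ) (hd : d < r / 4)
    (hd' : d * ((8 / r + 1) * (64 / min (r / 2) (1 / 4))) ≤ 1 / 2) (hc : ‖c‖ ≤ d)
    (hF : ∀ z ∈ Strip δ, F (H z) = H (z + α) + c) : c = 0 := by
  have hdc : d + ‖c‖ < r := by linarith
  have hdr : d < r := by linarith
  have hclose := intervalIntegral.norm_integral_le_of_norm_le_const (a := 0) (b := 1)
    fun t _ => hP.norm_map_add_sub_mul_deriv_le hH hr hδ hd (fun z => hP.norm_deriv_le hr) hc t
  have hdiff : Continuous fun t : ℝ => P (H t + c) - P (H t) :=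
    (hP.continuous_map_add hH hδ hdc).sub (hP.continuous_map hH hδ hdr)
  rw [intervalIntegral.integral_sub (hdiff.intervalIntegrable 0 1)
      (((hP.continuous_deriv_mul_deriv hH hδ hdr).const_mul c).intervalIntegrable 0 1),
    intervalIntegral.integral_const_mul, hP.integral_deriv_mul_deriv hH hδ hdr,
    hP.integral_map_add_sub hH hδ hdc hF, zero_sub, norm_neg, mul_one, sub_zero, abs_one,
    mul_one] at hclose
  have hhalf := mul_le_mul_of_nonneg_right hd' (norm_nonneg c)
  exact norm_le_zero_iff.1 (by linarith)

lemma exists_forall_eq_zero (hr : 0 < r) :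
    ∃ d₀ > 0, ∀ d ≤ d₀, ∀ {δ α : ℝ} {F P H : ℂ → ℂ} {c : ℂ}, 0 < δ → IsLinearization r α F P →
      IsNearIdentity δ d H → ‖c‖ ≤ d → (∀ z ∈ Strip δ, F (H z) = H (z + α) + c) → c = 0 := by
  set A := (8 / r + 1) * (64 / min (r / 2) (1 / 4))
  have hA₀ : 0 < A := by positivity
  refine ⟨min (r / 8) (1 / (2 * A)), by positivity, fun d hd δ α F P H c hδ hP hH hc hF =>
    hP.eq_zero_of_norm_le hH hr hδ ?_ ?_ hc hF⟩
  · linarith [min_le_left (r / 8) (1 / (2 * A))]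
  · calc d * A ≤ 1 / (2 * A) * A := by
          gcongr
          exact hd.trans (min_le_right _ _)
      _ = 1 / 2 := by field_simp

end IsLinearization

/-! ### The analytic defect -/

namespace WienerSeq

open scoped ContDiff

variable {δ σ α d : ℝ} {ψ : WienerSeq}

lemma eventually_norm_conjDisp_lt (δ α : ℝ) (hd : 0 < d) :
    ∀ᶠ ψ in nhds 0, ‖conjDisp δ α ψ‖ < d :=
  (contDiffAt_conjDisp δ α).continuousAt.norm.eventually_lt continuousAt_const
    (by simpa [conjDisp_zero] using hd)

lemma eventually_coeff_expCohomological_ne_zero (δ α : ℝ) :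
    ∀ᶠ ψ in nhds 0, coeff 0 (expCohomological δ α ψ) ≠ 0 :=
  ((coeff 0).continuous.continuousAt.comp
    (contDiffAt_expCohomological δ α).continuousAt).eventually_ne
      (by simp [coeff_expCohomological_zero])

lemma isNearIdentity_conjMap (hcoeff : coeff 0 (expCohomological δ α ψ) ≠ 0)
    (hdisp : ‖conjDisp δ α ψ‖ ≤ d) (hderiv : ‖conjDeriv δ α ψ - mode 0‖ ≤ d) :
    IsNearIdentity δ d (conjMap δ α ψ) where
  differentiableOn z hz :=
    (hasDerivAt_conjMap hcoeff hz).differentiableAt.differentiableWithinAt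
  norm_deriv_sub_one_le z hz := by
    rw [(hasDerivAt_conjMap hcoeff hz).deriv, ← evalAt_mode_zero (le_of_lt hz), ← map_sub]
    exact (norm_evalAt_le (le_of_lt hz) _).trans hderiv
  norm_sub_le z hz := by
    rw [conjMap, add_sub_cancel_left]
    exact (norm_evalAt_le (le_of_lt hz) _).trans hdisp
  map_add_one z _ := conjMap_add_one δ α ψ z

lemma eventually_isNearIdentity_conjMap (δ α : ℝ) (hd : 0 < d) :
    ∀ᶠ ψ in nhds 0, IsNearIdentity δ d (conjMap δ α ψ) := by
  have hderiv : ∀ᶠ ψ in nhds 0, ‖conjDeriv δ α ψ - mode 0‖ < d :=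
    ((contDiffAt_conjDeriv δ α).continuousAt.sub continuousAt_const).norm.eventually_lt
      continuousAt_const (by simpa [conjDeriv_zero] using hd)
  filter_upwards [eventually_coeff_expCohomological_ne_zero δ α,
    eventually_norm_conjDisp_lt δ α hd, hderiv] with ψ hcoeff hdisp hderiv
  exact isNearIdentity_conjMap hcoeff hdisp.le hderiv.le

lemma eventually_isConjSolution (δ α : ℝ) (hσ : 0 < σ) (c : ℂ) :
    ∀ᶠ p in nhds (c • mode 0, 0),
      conjEquation δ σ α p = 0 → IsConjSolution δ σ α p.1 p.2 := by
  have hsnd : Tendsto Prod.snd (nhds (c • mode 0, (0 : WienerSeq))) (nhds 0) :=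
    continuous_snd.continuousAt
  have hcomp : ∀ᶠ p in nhds (c • mode 0, 0),
      ‖compConj δ σ α (taylorOp 1 σ p.1) p.2‖ < 1 := by
    refine (contDiffAt_compConj δ α hσ (c • mode 0) _).continuousAt.norm.eventually_lt
      continuousAt_const ?_
    rw [compConj, map_smul, taylorOp_mode_zero one_ne_zero hσ, smul_zero, map_zero, norm_zero]
    exact one_pos
  filter_upwards [hsnd.eventually (eventually_coeff_expCohomological_ne_zero δ α),
    hsnd.eventually (eventually_norm_conjDisp_lt δ α hσ), hcomp] with p hcoeff hdisp hcomp heq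
  exact ⟨heq, hcoeff, hdisp, hcomp⟩

lemma eventually_norm_conjDefect_lt (hδ : 0 ≤ δ) (hσ : 0 < σ) (α : ℝ) (hd : 0 < d) :
    ∀ᶠ p in nhds ((α : ℂ) • mode 0, 0), ‖conjDefect δ σ α p‖ < d := by
  refine (contDiffAt_conjDefect δ α hσ _).continuousAt.norm.eventually_lt continuousAt_const ?_
  rwa [conjDefect_const hδ hσ, sub_self, norm_zero]

lemma exists_analytic_conjSolution (hδ : 0 ≤ δ) (hσ : 0 < σ) (α : ℝ) (hd : 0 < d) :
    ∃ g : WienerSeq → WienerSeq,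
      ContDiffAt ℂ ω (fun x => conjDefect δ σ α (x, g x)) ((α : ℂ) • mode 0) ∧
      (∀ᶠ c : ℂ in nhds α, conjDefect δ σ α (c • mode 0, g (c • mode 0)) = c - α) ∧
      ∀ᶠ x in nhds ((α : ℂ) • mode 0), IsConjSolution δ σ α x (g x) ∧
        IsNearIdentity δ d (conjMap δ α (g x)) ∧ ‖conjDefect δ σ α (x, g x)‖ < d := by
  obtain ⟨g, hg, hg₀, hsolves⟩ := exists_conjEquation_solution hδ hσ α α
  set x₀ : WienerSeq := (α : ℂ) • mode 0
  have hpair : ContDiffAt ℂ ω (fun x => (x, g x)) x₀ := contDiffAt_id.prodMk hg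
  have hpair_tendsto : Tendsto (fun x => (x, g x)) (nhds x₀) (nhds (x₀, 0)) := by
    simpa only [hg₀] using hpair.continuousAt.tendsto
  have hg_tendsto : Tendsto g (nhds x₀) (nhds 0) := by
    simpa only [hg₀] using hg.continuousAt.tendsto
  refine ⟨g, ?_, ?_, ?_⟩
  · have hdefect := contDiffAt_conjDefect δ α hσ x₀
    rw [← hg₀] at hdefect
    exact ContDiffAt.comp x₀ hdefect hpair
  · have hline : Tendsto (fun c : ℂ => c • mode 0) (nhds α) (nhds x₀) :=
      (continuous_id.smul continuous_const).continuousAt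
    filter_upwards [hline.eventually hsolves] with c hc
    rw [conjEquation_const hδ hσ] at hc
    rw [hc, conjDefect_const hδ hσ]
  · filter_upwards [hsolves, hpair_tendsto.eventually (eventually_isConjSolution δ α hσ α),
      hg_tendsto.eventually (eventually_isNearIdentity_conjMap δ α hd),
      hpair_tendsto.eventually (eventually_norm_conjDefect_lt hδ hσ α hd)]
      with x hsolves hsol hnear hdefect
    exact ⟨hsol hsolves, hnear, hdefect⟩

end WienerSeq

/-! ### The codimension-one submanifold -/

lemma fderiv_ne_zero_of_eventually_eq_sub {𝕜 E : Type*} [NontriviallyNormedField 𝕜]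
    [NormedAddCommGroup E] [NormedSpace 𝕜 E] {Ψ : E → 𝕜} {a : 𝕜} {e : E}
    (hΨ : DifferentiableAt 𝕜 Ψ (a • e)) (hline : ∀ᶠ c in nhds a, Ψ (c • e) = c - a) :
    fderiv 𝕜 Ψ (a • e) ≠ 0 := fun hzero => by
  have hcomp := hΨ.hasFDerivAt.comp_hasDerivAt a ((hasDerivAt_id a).smul_const e)
  have hderiv := hcomp.unique (((hasDerivAt_id a).sub_const a).congr_of_eventuallyEq hline)
  simp [hzero] at hderiv

lemma rotConst_eq_smul (ε α : ℝ) : rotConst ε α = (α : ℂ) • rotConst ε 1 := by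
  refine Subtype.ext (BoundedContinuousFunction.ext fun z => ?_)
  simp [rotConst]

namespace DSpace

open WienerSeq

variable {ε r δ σ α : ℝ} {u : DSpace ε} {ψ : WienerSeq}

lemma Fmap_conjMap (hε : 0 < ε)
    (hsol : IsConjSolution δ σ α (toWiener hε (δ + σ + σ) u) ψ) (hα : BadlyApproximable α)
    (hδ : 0 < δ) (hσ : 0 < σ) (hwidth : δ + σ + σ < ε) {z : ℂ} (hz : z ∈ Strip δ) :
    Fmap ε u (conjMap δ α ψ z)
      = conjMap δ α ψ (z + α) + conjDefect δ σ α (toWiener hε (δ + σ + σ) u, ψ) := by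
  have him : |(conjMap δ α ψ z).im| ≤ δ + σ + σ := by linarith [hsol.abs_im_conjMap_lt hz]
  rw [Fmap_eq_add_extend, ← evalAt_toWiener hε hwidth him, hsol.conjMap_add_evalAt hα hδ hσ hz]

lemma exists_forall_conjDefect_eq_zero_iff (hε : 0 < ε) (hα : BadlyApproximable α) (hr : 0 < r)
    (hrδ : r < δ) (hσ : 0 < σ) (hwidth : δ + σ + σ < ε) :
    ∃ d > 0, ∀ u : DSpace ε, ∀ ψ, IsConjSolution δ σ α (toWiener hε (δ + σ + σ) u) ψ →
      IsNearIdentity δ d (conjMap δ α ψ) →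
      ‖conjDefect δ σ α (toWiener hε (δ + σ + σ) u, ψ)‖ < d →
      (conjDefect δ σ α (toWiener hε (δ + σ + σ) u, ψ) = 0 ↔
        ∃ Φ, IsLinearization r α (Fmap ε u) Φ) := by
  obtain ⟨d₀, hd₀, huniq⟩ := IsLinearization.exists_forall_eq_zero hr
  obtain ⟨d, hd, hdle⟩ := exists_between
    (lt_min (half_pos (sub_pos.2 hrδ)) (lt_min hd₀ one_half_pos))
  obtain ⟨hdδ, hdd₀, hd_half⟩ := by simpa only [lt_min_iff] using hdle
  refine ⟨d, hd, fun u ψ hsol hnear hdefect => ⟨fun hzero => ?_, fun ⟨Φ, hΦ⟩ => ?_⟩⟩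
  · refine hnear.exists_isLinearization hd.le hd_half.le (by linarith) fun z hz => ?_
    rw [Fmap_conjMap hε hsol hα (hr.trans hrδ) hσ hwidth hz, hzero, add_zero]
  · exact huniq d hdd₀.le (hr.trans hrδ) hΦ hnear hdefect.le fun z hz =>
      Fmap_conjMap hε hsol hα (hr.trans hrδ) hσ hwidth hz

end DSpace

open WienerSeq DSpace in
theorem linearizable_codim_one_submanifold_general {ε r α : ℝ} (hr : 0 < r) (hrε : r < ε)
    (hα : BadlyApproximable α) :
    ∃ κ > (0 : ℝ), ∃ Ψ : DSpace ε → ℂ,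
      AnalyticOnNhd ℂ Ψ (Metric.ball (rotConst ε α) κ) ∧
      Ψ (rotConst ε α) = 0 ∧
      fderiv ℂ Ψ (rotConst ε α) ≠ 0 ∧
      ∀ u ∈ Metric.ball (rotConst ε α) κ,
        (Ψ u = 0 ↔ ∃ Φ, IsLinearization r α (Fmap ε u) Φ) := by
  have hε : 0 < ε := hr.trans hrε
  obtain ⟨δ, hrδ, hδε⟩ := exists_between hrε
  have hδ : 0 < δ := hr.trans hrδ
  obtain ⟨σ, hσ, hσ_lt⟩ := exists_between (half_pos (sub_pos.2 hδε))
  have hwidth : δ + σ + σ < ε := by linarith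
  obtain ⟨d, hd, hiff⟩ := exists_forall_conjDefect_eq_zero_iff hε hα hr hrδ hσ hwidth
  obtain ⟨g, hdefect, hline, hsol⟩ := exists_analytic_conjSolution hδ.le hσ α hd
  have hT := toWiener_rotConst hε hwidth
  set T := toWiener hε (δ + σ + σ)
  set Ψ : DSpace ε → ℂ := fun u => conjDefect δ σ α (T u, g (T u))
  have hT_line (c : ℂ) : T (c • rotConst ε 1) = c • mode 0 := by
    rw [map_smul, hT, Complex.ofReal_one, one_smul]
  have hΨ_line : ∀ᶠ c : ℂ in nhds α, Ψ (c • rotConst ε 1) = c - α :=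
    hline.mono fun c hc => by simpa only [Ψ, hT_line] using hc
  rw [rotConst_eq_smul]
  have hΨ : AnalyticAt ℂ Ψ ((α : ℂ) • rotConst ε 1) := by
    rw [← hT_line] at hdefect
    exact hdefect.analyticAt.comp (T.analyticAt _)
  have hsol_near := (T.continuous.tendsto' ((α : ℂ) • rotConst ε 1) _ (hT_line α)).eventually hsol
  obtain ⟨κ, hκ, hball⟩ := Metric.eventually_nhds_iff_ball.1
    (hΨ.eventually_analyticAt.and hsol_near)
  refine ⟨κ, hκ, Ψ, fun u hu => (hball u hu).1, hΨ_line.self_of_nhds.trans (sub_self _),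
    fderiv_ne_zero_of_eventually_eq_sub hΨ.differentiableAt hΨ_line, fun u hu => ?_⟩
  obtain ⟨-, hsol, hnear, hdefect⟩ := hball u hu
  exact hiff u _ hsol hnear hdefect

/-- Risler's theorem for bounded type: near `R_α` (with `α ∈ 𝒷𝒯_K`), the analytically
linearizable maps form an embedded analytic submanifold of codimension `1`: they are the
zero set of an analytic function `Ψ` whose derivative at `R_α` is a nonzero (hence
surjective) continuous linear functional. -/
theorem linearizable_codim_one_submanifold (ε : ℝ) (hε : 0 < ε) (K : ℕ)
    (α : ℝ) (hirr : Irrational α) (hmem : α ∈ Set.Ioo (0:ℝ) 1) (hbt : BddType K α) :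
    ∃ κ > (0:ℝ), ∃ Ψ : DSpace ε → ℂ,
      AnalyticOnNhd ℂ Ψ (Metric.ball (rotConst ε α) κ) ∧
      Ψ (rotConst ε α) = 0 ∧
      fderiv ℂ Ψ (rotConst ε α) ≠ 0 ∧
      ∀ u ∈ Metric.ball (rotConst ε α) κ, (Ψ u = 0 ↔ Linearizable ε α u) := by
  simp only [linearizable_iff]
  exact linearizable_codim_one_submanifold_general (half_pos hε) (half_lt_self hε)
    (hbt.badlyApproximable hirr hmem)
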